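/- arXiv:2205.06412 — 4 statements merged into one kernel-verified Lean document; each statement's English description precedes it below -/
import Mathlib

section
/- Fix K ≥ 1, channel matrices H_k ∈ ℂ^{n_k×n_t} (k = 1,…,K) and G ∈ ℂ^{n_e×n_t}, a power budget P ≥ 0, and nonnegative weights w_1,…,w_K. For a permutation σ of {1,…,K}, let φ_σ be the supremum of the weighted secrecy sum rate Σ_{k=1}^K w_{σ_k} R_{σ_k} over all K-tuples (Q_1,…,Q_K) of Hermitian positive semidefinite n_t×n_t complex matrices satisfying Σ_{k=1}^K tr(Q_k) ≤ P and R_{σ_k} ≥ 0 for every k. If π* is a permutation such that w_{π*_1} ≥ w_{π*_2} ≥ … ≥ w_{π*_K}, then φ_σ ≤ φ_{π*} for every permutation σ; i.e., the descending-weight encoding order maximizes the weighted secrecy sum rate. -/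
/-!
Write `g_M(X) = log det (1 + M X)`, `M_u = H_uᴴ H_u`, `E = Gᴴ G`. The rate of user `u` is the
increment of `g_{M_u} - g_E` from the covariance `S` encoded after `u` to `S + Q_u`.

The heart of the proof is a reflection (`exists_reflection`): given `S ≤ A ≤ T` and `B ≥ 0` there
is `A'` with `S ≤ A' ≤ T` for which `D(M) = g_M(A) + g_M(A') - g_M(T) - g_M(S)`, as a function of
`M ≥ 0`, is smallest at `M = B`. Absorbing `S` into the noise reduces to `S = 0`. Then `A'` is
chosen to make `B` a stationary point of `D`, i.e. `U_{A'} = U_T - U_A` with `U_X = X (1 + B X)⁻¹`,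
and `D(M) ≥ D(B)` becomes
`det (1 + (M - B) p) det (1 + (M - B) q) ≥ det (1 + (M - B) (p + q))` for `p = U_A`, `q = U_{A'}`,
which is Fischer's determinant inequality (`fischer_sum`).

Suppose users `a`, `b` are adjacent, `a` first, and `w_a ≤ w_b`. Exchanging them and replacing the
intermediate covariance `A` by its reflection with respect to `M_b` changes the weighted sum rate
by `(w_b - w_a) (D(E) - D(M_b)) + w_a (D(M_a) - D(M_b)) ≥ 0` (`exists_adjacent_swap`). Sorting by such
exchanges gives the descending order (`exists_sorted`). The exchanges may produce negative rates;
a reflection with respect to `E` removes them (`exists_nonneg_rates`). Finally the rates are bounded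
under the power constraint (`lVal_le`), so the suprema are genuine.
-/


open Matrix Finset ComplexOrder

/-- `log det(I + B)` for a complex square matrix `B` (real part of the determinant,
which is real when `B` is positive semidefinite). -/
noncomputable def logdetI {m : ℕ} (B : Matrix (Fin m) (Fin m) ℂ) : ℝ :=
  Real.log ((1 + B).det.re)

/-- Secrecy rate of the user at position `k` under encoding order `π`. -/
noncomputable def secrecyRate {K nt ne : ℕ} {n : Fin K → ℕ}
    (H : ∀ k : Fin K, Matrix (Fin (n k)) (Fin nt) ℂ)
    (G : Matrix (Fin ne) (Fin nt) ℂ) (π : Equiv.Perm (Fin K))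
    (Q : Fin K → Matrix (Fin nt) (Fin nt) ℂ) (k : Fin K) : ℝ :=
  logdetI (H (π k) * (∑ j ∈ Finset.univ.filter (fun j => k ≤ j), Q (π j)) * (H (π k))ᴴ)
    - logdetI (H (π k) * (∑ j ∈ Finset.univ.filter (fun j => k < j), Q (π j)) * (H (π k))ᴴ)
    - logdetI (G * (∑ j ∈ Finset.univ.filter (fun j => k ≤ j), Q (π j)) * Gᴴ)
    + logdetI (G * (∑ j ∈ Finset.univ.filter (fun j => k < j), Q (π j)) * Gᴴ)

/-- Optimal weighted secrecy sum rate under encoding order `π`, power budget `P`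
and weights `w`. -/
noncomputable def phi {K nt ne : ℕ} {n : Fin K → ℕ}
    (H : ∀ k : Fin K, Matrix (Fin (n k)) (Fin nt) ℂ)
    (G : Matrix (Fin ne) (Fin nt) ℂ) (P : ℝ) (w : Fin K → ℝ)
    (π : Equiv.Perm (Fin K)) : ℝ :=
  sSup {r : ℝ | ∃ Q : Fin K → Matrix (Fin nt) (Fin nt) ℂ,
    (∀ k, (Q k).PosSemidef) ∧ (∑ k, ((Q k).trace).re) ≤ P ∧
    (∀ k, 0 ≤ secrecyRate H G π Q k) ∧
    r = ∑ k, w (π k) * secrecyRate H G π Q k}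


/-! ### Determinants of `1 + X` and Fischer's inequality -/

lemma trace_mul_conjTranspose_re {l k : Type*} [Fintype l] [Fintype k] (A : Matrix l k ℂ) :
    (A * Aᴴ).trace.re = ∑ i, ∑ j, ‖A i j‖ ^ 2 := by
  simp [Matrix.trace, Matrix.mul_apply, Complex.mul_conj, Complex.normSq_eq_norm_sq,
    -Complex.ofReal_pow]

section MatrixPart

variable {n m : Type*} [Fintype n] [DecidableEq n] [Fintype m] [DecidableEq m]

lemma psd_factor {X : Matrix n n ℂ} (hX : X.PosSemidef) : ∃ C : Matrix n n ℂ, X = Cᴴ * C := by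
  open scoped MatrixOrder in
  exact CStarAlgebra.nonneg_iff_eq_star_mul_self.mp hX.nonneg

lemma det_one_add_eq_prod {X : Matrix n n ℂ} (hX : X.IsHermitian) :
    (1 + X).det = ∏ i, (1 + (hX.eigenvalues i : ℂ)) := by
  conv_lhs => rw [hX.spectral_theorem,
    ← map_one (Unitary.conjStarAlgAut ℂ _ hX.eigenvectorUnitary), ← map_add]
  rw [Unitary.conjStarAlgAut_apply, det_mul_comm, ← Matrix.mul_assoc]
  simp [← diagonal_one, diagonal_add, det_diagonal]

lemma one_le_norm_det {X : Matrix n n ℂ} (hX : X.PosSemidef) : 1 ≤ ‖(1 + X).det‖ := by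
  rw [det_one_add_eq_prod hX.1, norm_prod]
  rw [← Finset.prod_const_one (s := Finset.univ) (ι := n)]
  refine Finset.prod_le_prod (fun _ _ => zero_le_one) fun i _ => ?_
  have h := hX.eigenvalues_nonneg i
  rw [← Complex.ofReal_one, ← Complex.ofReal_add, Complex.norm_real, Real.norm_of_nonneg] <;> linarith

lemma norm_det_le_exp_trace {X : Matrix n n ℂ} (hX : X.PosSemidef) :
    ‖(1 + X).det‖ ≤ Real.exp X.trace.re := by
  rw [det_one_add_eq_prod hX.1, norm_prod, hX.1.trace_eq_sum_eigenvalues, Complex.re_sum,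
    Real.exp_sum]
  refine Finset.prod_le_prod (fun i _ => norm_nonneg _) fun i _ => ?_
  have h := hX.eigenvalues_nonneg i
  rw [← Complex.ofReal_one, ← Complex.ofReal_add, Complex.norm_real, Real.norm_of_nonneg (by linarith)]
  have := Real.add_one_le_exp (hX.1.eigenvalues i)
  simpa [add_comm] using this

lemma norm_det_le_of_add {P N : Matrix n n ℂ} (hP : P.PosDef) (hN : N.PosSemidef) :
    ‖P.det‖ ≤ ‖(P + N).det‖ := by
  obtain ⟨L, rfl⟩ := psd_factor hN
  rw [det_add_mul _ _ (hP.det_pos.ne'.isUnit), norm_mul]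
  exact le_mul_of_one_le_right (norm_nonneg _)
    (one_le_norm_det (hP.inv.posSemidef.mul_mul_conjTranspose_same L))

/-- Fischer's inequality for a positive definite block matrix: its determinant is at most the
product of the determinants of the diagonal blocks. -/
lemma fischer {A : Matrix m m ℂ} {B : Matrix m n ℂ} {D : Matrix n n ℂ}
    (h : (fromBlocks A B Bᴴ D).PosDef) :
    ‖(fromBlocks A B Bᴴ D).det‖ ≤ ‖A.det‖ * ‖D.det‖ := by
  have hA : A.PosDef := by
    exact h.submatrix (e := Sum.inl) Sum.inl_injective
  have := hA.isUnit.invertible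
  have hS : (D - Bᴴ * A⁻¹ * B).PosSemidef := (PosDef.fromBlocks₁₁ B D hA).1 h.posSemidef
  have hdet := det_fromBlocks₁₁ A B Bᴴ D
  rw [invOf_eq_nonsing_inv] at hdet
  have hSd : (D - Bᴴ * A⁻¹ * B).PosDef := by
    rw [hS.posDef_iff_det_ne_zero]
    intro h0
    rw [h0, mul_zero] at hdet
    exact h.det_pos.ne' hdet
  rw [hdet, norm_mul]
  refine mul_le_mul_of_nonneg_left ?_ (norm_nonneg _)
  have := norm_det_le_of_add hSd (hA.inv.posSemidef.conjTranspose_mul_mul_same B)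
  simpa using this

/-! ### The transform `X (1 + B X)⁻¹` -/

lemma isUnit_one_add {B X : Matrix n n ℂ} (hB : B.PosSemidef) (hX : X.PosSemidef) :
    IsUnit (1 + B * X).det := by
  obtain ⟨C, rfl⟩ := psd_factor hB
  rw [Matrix.mul_assoc, det_one_add_mul_comm]
  exact (PosDef.one.add_posSemidef (hX.mul_mul_conjTranspose_same C)).det_pos.ne'.isUnit

/-- `X (1 + B X)⁻¹`, which is `(X⁻¹ + B)⁻¹` for invertible `X`. It is the gradient of
`log det (1 + M X)` with respect to `M` at `M = B`, and `par S M` is the Gram matrix of the channel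
`M` once an interference of covariance `S` has been absorbed into the noise. -/
noncomputable def par (B X : Matrix n n ℂ) : Matrix n n ℂ := X * (1 + B * X)⁻¹

lemma conjT_inv {B X : Matrix n n ℂ} (hB : B.PosSemidef) (hX : X.PosSemidef) :
    ((1 + B * X)⁻¹)ᴴ = (1 + X * B)⁻¹ := by
  rw [conjTranspose_nonsing_inv, conjTranspose_add, conjTranspose_mul, hB.1.eq, hX.1.eq,
    conjTranspose_one]

lemma par_eq {B X : Matrix n n ℂ} (hB : B.PosSemidef) (hX : X.PosSemidef) :
    par B X = (1 + X * B)⁻¹ * X := by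
  have h1 := mul_nonsing_inv _ (isUnit_one_add hB hX)
  have h2 := nonsing_inv_mul _ (isUnit_one_add hX hB)
  unfold par
  calc X * (1 + B * X)⁻¹ = ((1 + X * B)⁻¹ * (1 + X * B)) * X * (1 + B * X)⁻¹ := by
        rw [h2, Matrix.one_mul]
    _ = (1 + X * B)⁻¹ * X * ((1 + B * X) * (1 + B * X)⁻¹) := by noncomm_ring
    _ = _ := by rw [h1, Matrix.mul_one]

lemma par_psd {B X : Matrix n n ℂ} (hB : B.PosSemidef) (hX : X.PosSemidef) :
    (par B X).PosSemidef := by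
  have h1 := mul_nonsing_inv _ (isUnit_one_add hB hX)
  have h : par B X = ((1 + B * X)⁻¹)ᴴ * (X + X * B * Xᴴ) * (1 + B * X)⁻¹ := by
    rw [conjT_inv hB hX, hX.1.eq]
    calc par B X = (1 + X * B)⁻¹ * X * ((1 + B * X) * (1 + B * X)⁻¹) := by
          rw [h1, Matrix.mul_one, par_eq hB hX]
      _ = _ := by noncomm_ring
  rw [h]
  exact (hX.add (hB.mul_mul_conjTranspose_same X)).conjTranspose_mul_mul_same _

lemma one_add_shift {M S : Matrix n n ℂ} (hM : M.PosSemidef) (hS : S.PosSemidef)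
    (X : Matrix n n ℂ) : 1 + M * X = (1 + M * S) * (1 + par S M * (X - S)) := by
  have h1 := mul_nonsing_inv _ (isUnit_one_add hM hS)
  rw [par_eq hS hM]
  calc 1 + M * X = 1 + M * S + 1 * (M * (X - S)) := by noncomm_ring
    _ = 1 + M * S + ((1 + M * S) * (1 + M * S)⁻¹) * (M * (X - S)) := by rw [h1]
    _ = _ := by noncomm_ring

/-- Monotonicity in the Loewner order, from the congruence
`par B Y - par B X = Nᴴ (par (par X B) (Y - X)) N` with `N = (1 + B X)⁻¹`. -/
lemma par_mono {B X Y : Matrix n n ℂ} (hB : B.PosSemidef) (hX : X.PosSemidef)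
    (hXY : (Y - X).PosSemidef) : (par B Y - par B X).PosSemidef := by
  have hJ := mul_nonsing_inv _ (isUnit_one_add (par_psd hX hB) hXY)
  have hcongr : par B Y - par B X =
      ((1 + B * X)⁻¹)ᴴ * par (par X B) (Y - X) * (1 + B * X)⁻¹ := by
    have h2 := nonsing_inv_mul _ (isUnit_one_add hX hB)
    have h3 : (1 + X * B)⁻¹ = 1 - X * par X B := by
      have : (1 + X * B)⁻¹ * (1 + X * B) * (1 - X * par X B) = (1 + X * B)⁻¹ := by
        rw [Matrix.mul_assoc]
        conv_rhs => rw [← Matrix.mul_one (1 + X * B)⁻¹]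
        congr 1
        have h4 := mul_nonsing_inv _ (isUnit_one_add hB hX)
        rw [par_eq hX hB]
        calc (1 + X * B) * (1 - X * ((1 + B * X)⁻¹ * B))
            = 1 + X * B - X * ((1 + B * X) * (1 + B * X)⁻¹) * B := by noncomm_ring
          _ = 1 := by rw [h4]; noncomm_ring
      rw [← this, h2, Matrix.one_mul]
    rw [conjT_inv hB hX, h3]
    have hy : par B Y = Y * ((1 + par X B * (Y - X))⁻¹ * (1 + B * X)⁻¹) := by
      rw [par, one_add_shift hB hX, Matrix.mul_inv_rev]
    rw [hy]
    unfold par at hJ ⊢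
    generalize (1 + B * (1 + X * B)⁻¹ * (Y - X))⁻¹ = J at *
    generalize (1 + X * B)⁻¹ = N at *
    generalize (1 + B * X)⁻¹ = V at *
    calc Y * (J * V) - X * V = Y * J * V - X * 1 * V := by noncomm_ring
      _ = Y * J * V - X * ((1 + B * N * (Y - X)) * J) * V := by rw [hJ]
      _ = _ := by noncomm_ring
  rw [hcongr]
  exact (par_psd (par_psd hX hB) hXY).conjTranspose_mul_mul_same _

/-! ### Log-determinants and the reflection -/

/-- `log det (1 + M X)`. For positive semidefinite `M` and `X` the determinant is a positive real,
so the norm does not change it. -/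
noncomputable def gld (M X : Matrix n n ℂ) : ℝ := Real.log ‖(1 + M * X).det‖

lemma gld_shift {M S X : Matrix n n ℂ} (hM : M.PosSemidef) (hS : S.PosSemidef)
    (hX : (X - S).PosSemidef) : gld M X = gld M S + gld (par S M) (X - S) := by
  unfold gld
  rw [one_add_shift hM hS, det_mul, norm_mul, Real.log_mul]
  · exact norm_ne_zero_iff.2 (isUnit_one_add hM hS).ne_zero
  · exact norm_ne_zero_iff.2 (isUnit_one_add (par_psd hS hM) hX).ne_zero

/-- Change of channel from `B` to `M`: `1 + M X = (1 + (M - B) (par B X)) (1 + B X)`. -/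
lemma gld_change {M B X : Matrix n n ℂ} (hM : M.PosSemidef) (hB : B.PosSemidef)
    (hX : X.PosSemidef) : (1 + (M - B) * par B X).det ≠ 0 ∧
      gld M X = gld B X + Real.log ‖(1 + (M - B) * par B X).det‖ := by
  have h1 := mul_nonsing_inv _ (isUnit_one_add hB hX)
  have h2 := nonsing_inv_mul _ (isUnit_one_add hB hX)
  have h : 1 + M * X = (1 + (M - B) * par B X) * (1 + B * X) := by
    unfold par
    calc 1 + M * X = 1 + B * X + (M - B) * X * 1 := by noncomm_ring
      _ = 1 + B * X + (M - B) * X * ((1 + B * X)⁻¹ * (1 + B * X)) := by rw [h2]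
      _ = _ := by noncomm_ring
  have h0 := (isUnit_one_add hM hX).ne_zero
  rw [h, det_mul] at h0
  have h0' := mul_ne_zero_iff.1 h0
  refine ⟨h0'.1, ?_⟩
  unfold gld
  rw [h, det_mul, norm_mul, Real.log_mul, add_comm]
  · exact norm_ne_zero_iff.2 h0'.1
  · exact norm_ne_zero_iff.2 h0'.2

/-- With `p = Lᴴ L`, `q = Nᴴ N` and `F` the matrix `L` stacked on `N`, the three determinants are
those of `1 + F (M - B) Fᴴ` and of its two diagonal blocks, so this is Fischer's inequality. -/
lemma fischer_sum {M B T p q : Matrix n n ℂ} (hM : M.PosSemidef) (hB : B.PosSemidef)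
    (hT : T.PosSemidef) (hp : p.PosSemidef) (hq : q.PosSemidef) (hpq : p + q = par B T) :
    ‖(1 + (M - B) * par B T).det‖ ≤
      ‖(1 + (M - B) * p).det‖ * ‖(1 + (M - B) * q).det‖ := by
  obtain ⟨L, rfl⟩ := psd_factor hp
  obtain ⟨N, rfl⟩ := psd_factor hq
  set Z := M - B with hZ
  have hZh : Z.IsHermitian := hM.1.sub hB.1
  set F : Matrix (n ⊕ n) n ℂ := fromRows L N with hF
  have hFF : Fᴴ * F = par B T := by
    rw [← hpq, hF, conjTranspose_fromRows_eq_fromCols_conjTranspose, fromCols_mul_fromRows]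
  have e1 : (1 + Z * par B T).det = (1 + F * Z * Fᴴ).det := by
    rw [← hFF, ← Matrix.mul_assoc, det_one_add_mul_comm, ← Matrix.mul_assoc]
  have e2 : (1 + Z * (Lᴴ * L)).det = (1 + L * Z * Lᴴ).det := by
    rw [← Matrix.mul_assoc, det_one_add_mul_comm, ← Matrix.mul_assoc]
  have e3 : (1 + Z * (Nᴴ * N)).det = (1 + N * Z * Nᴴ).det := by
    rw [← Matrix.mul_assoc, det_one_add_mul_comm, ← Matrix.mul_assoc]
  -- Positivity: `Y = 1 - F B Fᴴ` satisfies `Y = Yᴴ Y + F (par T B) Fᴴ`.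
  have hE : (1 - F * B * Fᴴ).PosSemidef := by
    have hEh : (1 - F * B * Fᴴ)ᴴ = 1 - F * B * Fᴴ := by
      simp [Matrix.mul_assoc, hB.1.eq]
    have h4 := mul_nonsing_inv _ (isUnit_one_add hT hB)
    have hr : par T B = B - B * par B T * B := by
      rw [par_eq hB hT]
      have h2 := nonsing_inv_mul _ (isUnit_one_add hT hB)
      unfold par
      calc B * (1 + T * B)⁻¹ = B * ((1 + T * B)⁻¹ * (1 + T * B)) - B * ((1 + T * B)⁻¹ * T) * B := by
            noncomm_ring
        _ = _ := by rw [h2]; noncomm_ring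
    have : 1 - F * B * Fᴴ = (1 - F * B * Fᴴ)ᴴ * (1 - F * B * Fᴴ) + F * par T B * Fᴴ := by
      rw [hEh, hr, ← hFF]
      simp only [Matrix.mul_sub, Matrix.sub_mul, Matrix.mul_one, Matrix.one_mul, Matrix.mul_assoc]
      abel
    rw [this]
    exact (posSemidef_conjTranspose_mul_self _).add
      ((par_psd hT hB).mul_mul_conjTranspose_same F)
  have hPsd : (1 + F * Z * Fᴴ).PosSemidef := by
    have : 1 + F * Z * Fᴴ = (1 - F * B * Fᴴ) + F * M * Fᴴ := by
      rw [hZ, Matrix.mul_sub, Matrix.sub_mul]; abel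
    rw [this]
    exact hE.add (hM.mul_mul_conjTranspose_same F)
  have hPd : (1 + F * Z * Fᴴ).PosDef := by
    rw [hPsd.posDef_iff_det_ne_zero, ← e1]
    exact (gld_change hM hB hT).1
  have hblk : 1 + F * Z * Fᴴ = fromBlocks (1 + L * Z * Lᴴ) (L * Z * Nᴴ) (L * Z * Nᴴ)ᴴ
      (1 + N * Z * Nᴴ) := by
    rw [hF, fromRows_mul, conjTranspose_fromRows_eq_fromCols_conjTranspose, fromRows_mul_fromCols,
      ← fromBlocks_one, fromBlocks_add]
    simp [hZh.eq, Matrix.mul_assoc]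
  rw [e1, e2, e3, hblk]
  rw [hblk] at hPd
  exact fischer hPd

/-- The case `S = 0` of `exists_reflection`. The matrix `A'` is the solution of
`par B A' = par B T - par B A`, which makes `B` a stationary point of
`M ↦ gld M A + gld M A' - gld M T`; `fischer_sum` shows that it is a global minimum. -/
lemma exists_reflection_zero {B A T : Matrix n n ℂ} (hB : B.PosSemidef) (hA : A.PosSemidef)
    (hT : (T - A).PosSemidef) :
    ∃ A' : Matrix n n ℂ, A'.PosSemidef ∧ (T - A').PosSemidef ∧
      ∀ M : Matrix n n ℂ, M.PosSemidef →
        gld B A + gld B A' - gld B T ≤ gld M A + gld M A' - gld M T := by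
  have hT0 : T.PosSemidef := by simpa using hT.add hA
  have hq : (par B T - par B A).PosSemidef := par_mono hB hA hT
  have hTB : (1 + T * B)ᴴ = 1 + B * T := by
    simp [hT0.1.eq, hB.1.eq]
  set U := par B A with hU
  have hUp : U.PosSemidef := par_psd hB hA
  -- `A'` is `T - par (par T B) W`; the bound `0 ≤ A'` holds because `par (par T B)` is monotone,
  -- `W ≤ (1 + T B) T`, and `par (par T B) ((1 + T B) T) = T`.
  set W := (1 + T * B) * U * (1 + B * T) with hW
  have hWp : W.PosSemidef := by
    have := hUp.mul_mul_conjTranspose_same (1 + T * B)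
    rwa [hTB] at this
  have hBt : (par T B).PosSemidef := par_psd hT0 hB
  have u1 := mul_nonsing_inv _ (isUnit_one_add hB hT0)
  have u2 := nonsing_inv_mul _ (isUnit_one_add hB hT0)
  have v1 := mul_nonsing_inv _ (isUnit_one_add hT0 hB)
  have v2 := nonsing_inv_mul _ (isUnit_one_add hT0 hB)
  have hTU : par B T * (1 + B * T) = T := by
    rw [par, Matrix.mul_assoc, u2, Matrix.mul_one]
  have hTpar : par (par T B) ((1 + T * B) * T) = T := by
    have : 1 + par T B * ((1 + T * B) * T) = 1 + B * T := by
      rw [par, ← Matrix.mul_assoc, Matrix.mul_assoc B, v2, Matrix.mul_one]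
    rw [par, this]
    calc (1 + T * B) * T * (1 + B * T)⁻¹ = T * ((1 + B * T) * (1 + B * T)⁻¹) := by noncomm_ring
      _ = T := by rw [u1, Matrix.mul_one]
  have hWT : ((1 + T * B) * T - W).PosSemidef := by
    have h := hq.mul_mul_conjTranspose_same (1 + T * B)
    rw [hTB] at h
    have e : (1 + T * B) * T - W = (1 + T * B) * (par B T - U) * (1 + B * T) := by
      calc (1 + T * B) * T - W
          = (1 + T * B) * (par B T * (1 + B * T)) - (1 + T * B) * U * (1 + B * T) := by rw [hTU]
        _ = _ := by simp only [Matrix.mul_sub, Matrix.sub_mul, Matrix.mul_assoc]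
    rwa [e]
  have hA' : (T - par (par T B) W).PosSemidef := by
    have := par_mono hBt hWp hWT
    rwa [hTpar] at this
  refine ⟨T - par (par T B) W, hA', by simpa using par_psd hBt hWp, ?_⟩
  set A' := T - par (par T B) W with hA'def
  have hJu := isUnit_one_add hBt hWp
  have hJ1 := mul_nonsing_inv _ hJu
  have hJ2 := nonsing_inv_mul _ hJu
  have hBW : par T B * W = B * U * (1 + B * T) := by
    rw [par, hW]
    calc B * (1 + T * B)⁻¹ * ((1 + T * B) * U * (1 + B * T))
        = B * ((1 + T * B)⁻¹ * (1 + T * B)) * U * (1 + B * T) := by noncomm_ring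
      _ = _ := by rw [v2, Matrix.mul_one]
  have hA'J : A' * (1 + par T B * W) = (par B T - U) * (1 + B * T) := by
    have h : par (par T B) W * (1 + par T B * W) = W := by
      rw [par.eq_1 (par T B), Matrix.mul_assoc, hJ2, Matrix.mul_one]
    rw [Matrix.sub_mul (par B T), hTU, hA'def, Matrix.sub_mul, h, hBW, hW]
    noncomm_ring
  have hBA'J : (1 + B * A') * (1 + par T B * W) = 1 + B * T := by
    rw [Matrix.add_mul, Matrix.mul_assoc, hA'J, Matrix.sub_mul, hTU, hBW]
    noncomm_ring
  have hpar : par B A' = par B T - U := by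
    have h1 : A' = (par B T - U) * (1 + B * A') := by
      calc A' = A' * (1 + par T B * W) * (1 + par T B * W)⁻¹ := by
            rw [Matrix.mul_assoc, hJ1, Matrix.mul_one]
        _ = (par B T - U) * (1 + B * A') * ((1 + par T B * W) * (1 + par T B * W)⁻¹) := by
            rw [hA'J, ← hBA'J]; simp only [Matrix.mul_assoc]
        _ = _ := by rw [hJ1, Matrix.mul_one]
    have h2 := mul_nonsing_inv _ (isUnit_one_add hB hA')
    calc par B A' = (par B T - U) * (1 + B * A') * (1 + B * A')⁻¹ := by rw [← h1, par]
      _ = _ := by rw [Matrix.mul_assoc, h2, Matrix.mul_one]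
  intro M hM
  obtain ⟨a1, a2⟩ := gld_change hM hB hA
  obtain ⟨b1, b2⟩ := gld_change hM hB hA'
  obtain ⟨c1, c2⟩ := gld_change hM hB hT0
  have hf := fischer_sum hM hB hT0 hUp (par_psd hB hA') (by rw [hpar]; abel)
  have hl := Real.log_le_log (norm_pos_iff.2 c1) hf
  rw [Real.log_mul (norm_ne_zero_iff.2 a1) (norm_ne_zero_iff.2 b1)] at hl
  linarith

/-- For `S ≤ A ≤ T` and a channel `B` there is a reflected point `S ≤ A' ≤ T` such that, among all
channels `M`, the quantity `gld M A + gld M A' - gld M T - gld M S` is smallest at `M = B`. -/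
lemma exists_reflection {B S A T : Matrix n n ℂ} (hB : B.PosSemidef) (hS : S.PosSemidef)
    (hA : (A - S).PosSemidef) (hT : (T - A).PosSemidef) :
    ∃ A' : Matrix n n ℂ, (A' - S).PosSemidef ∧ (T - A').PosSemidef ∧
      ∀ M : Matrix n n ℂ, M.PosSemidef →
        gld B A + gld B A' - gld B T - gld B S ≤ gld M A + gld M A' - gld M T - gld M S := by
  obtain ⟨X, hX, hTX, h⟩ := exists_reflection_zero (T := T - S) (par_psd hS hB) hA (by simpa using hT)
  have hTS : (T - S).PosSemidef := by simpa using hT.add hA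
  refine ⟨X + S, by simpa using hX, by simpa [sub_sub, add_comm] using hTX, fun M hM => ?_⟩
  have := h (par S M) (par_psd hS hM)
  rw [gld_shift hB hS hA, gld_shift (X := X + S) hB hS (by simpa using hX), gld_shift hB hS hTS,
    gld_shift hM hS hA, gld_shift (X := X + S) hM hS (by simpa using hX), gld_shift hM hS hTS]
  simp only [add_sub_cancel_right]
  linarith

lemma gld_nonneg {M X : Matrix n n ℂ} (hM : M.PosSemidef) (hX : X.PosSemidef) :
    0 ≤ gld M X := by
  obtain ⟨C, rfl⟩ := psd_factor hM
  rw [gld, Matrix.mul_assoc, det_one_add_mul_comm]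
  exact Real.log_nonneg (one_le_norm_det (hX.mul_mul_conjTranspose_same C))

lemma gld_mono {M X Y : Matrix n n ℂ} (hM : M.PosSemidef) (hX : X.PosSemidef)
    (h : (Y - X).PosSemidef) : gld M X ≤ gld M Y := by
  rw [gld_shift hM hX h]
  linarith [gld_nonneg (par_psd hX hM) h]

lemma gld_le {M X : Matrix n n ℂ} (hM : M.PosSemidef) (hX : X.PosSemidef) :
    gld M X ≤ M.trace.re * X.trace.re := by
  obtain ⟨C, rfl⟩ := psd_factor hM
  obtain ⟨L, rfl⟩ := psd_factor hX
  have hpos := hX.mul_mul_conjTranspose_same C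
  have h1 : gld (Cᴴ * C) (Lᴴ * L) ≤ (C * (Lᴴ * L) * Cᴴ).trace.re := by
    rw [gld, Matrix.mul_assoc, det_one_add_mul_comm,
      Real.log_le_iff_le_exp (lt_of_lt_of_le one_pos (one_le_norm_det hpos))]
    exact norm_det_le_exp_trace hpos
  refine h1.trans ?_
  have e1 : C * (Lᴴ * L) * Cᴴ = (C * Lᴴ) * (C * Lᴴ)ᴴ := by simp [Matrix.mul_assoc]
  rw [e1, trace_mul_comm Cᴴ, trace_mul_conjTranspose_re, trace_mul_conjTranspose_re,
    trace_mul_comm Lᴴ, trace_mul_conjTranspose_re, Finset.sum_mul_sum]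
  refine Finset.sum_le_sum fun i _ => Finset.sum_le_sum fun j _ => ?_
  have h2 : ‖(C * Lᴴ) i j‖ ≤ ∑ k, ‖C i k‖ * ‖L j k‖ := by
    rw [Matrix.mul_apply]
    refine (norm_sum_le _ _).trans (le_of_eq ?_)
    simp
  exact (pow_le_pow_left₀ (norm_nonneg _) h2 2).trans (Finset.sum_mul_sq_le_sq_mul_sq _ _ _)
end MatrixPart

/-! ### Reordering lists of users -/

section Lists

variable {ι n : Type*}

/-- Total covariance of a list of (user, covariance) pairs. Such a list encodes an encoding order
together with its covariances: the entry at the head is encoded first and is disturbed by all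
entries behind it. -/
def lTot (L : List (ι × Matrix n n ℂ)) : Matrix n n ℂ := (L.map Prod.snd).sum

/-- All covariances in the list are positive semidefinite. -/
def lPsd (L : List (ι × Matrix n n ℂ)) : Prop := ∀ x ∈ L, x.2.PosSemidef

@[simp] lemma lTot_cons (x : ι × Matrix n n ℂ) (L : List (ι × Matrix n n ℂ)) :
    lTot (x :: L) = x.2 + lTot L := by simp [lTot]

lemma lTot_ofFn {m : ℕ} (c : Fin m → ι × Matrix n n ℂ) :
    lTot (List.ofFn c) = ∑ k, (c k).2 := by
  simp [lTot, List.map_ofFn, List.sum_ofFn]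

lemma lPsd_cons {x : ι × Matrix n n ℂ} {L : List (ι × Matrix n n ℂ)} :
    lPsd (x :: L) ↔ x.2.PosSemidef ∧ lPsd L := by simp [lPsd]

lemma lTot_psd {L : List (ι × Matrix n n ℂ)} (h : lPsd L) : (lTot L).PosSemidef := by
  induction L with
  | nil => simpa [lTot] using PosSemidef.zero
  | cons x L ih =>
    rw [lPsd_cons] at h
    simpa using h.1.add (ih h.2)

variable [Fintype n] [DecidableEq n]

/-- The function `X ↦ log det (1 + M u X) - log det (1 + E X)`, whose increments are the secrecy
rates of user `u`; here `M u` and `E` are the Gram matrices `Hᴴ H` and `Gᴴ G`. -/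
noncomputable def secf (M : ι → Matrix n n ℂ) (E : Matrix n n ℂ) (u : ι) (X : Matrix n n ℂ) : ℝ :=
  gld (M u) X - gld E X

/-- Weighted secrecy sum rate of a list of (user, covariance) pairs. -/
noncomputable def lVal (M : ι → Matrix n n ℂ) (E : Matrix n n ℂ) (w : ι → ℝ) :
    List (ι × Matrix n n ℂ) → ℝ
  | [] => 0
  | x :: L => w x.1 * (secf M E x.1 (x.2 + lTot L) - secf M E x.1 (lTot L)) + lVal M E w L

/-- All secrecy rates of a list of (user, covariance) pairs are nonnegative. -/
def lNonneg (M : ι → Matrix n n ℂ) (E : Matrix n n ℂ) : List (ι × Matrix n n ℂ) → Prop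
  | [] => True
  | x :: L => 0 ≤ secf M E x.1 (x.2 + lTot L) - secf M E x.1 (lTot L) ∧ lNonneg M E L

variable {M : ι → Matrix n n ℂ} {E : Matrix n n ℂ} {w : ι → ℝ}

/-- Two adjacent users, the second of which has the larger weight, can exchange places without
lowering the weighted sum rate or changing the total covariance. The intermediate covariance is
reflected with respect to the channel of the user `b` that moves to the front. -/
lemma exists_adjacent_swap (hM : ∀ u, (M u).PosSemidef) (hE : E.PosSemidef) (hw : ∀ u, 0 ≤ w u)
    {a b : ι} {Qa Qb : Matrix n n ℂ} {L : List (ι × Matrix n n ℂ)}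
    (h : lPsd ((a, Qa) :: (b, Qb) :: L)) (hab : w a ≤ w b) :
    ∃ Qa' Qb' : Matrix n n ℂ, lPsd ((b, Qb') :: (a, Qa') :: L) ∧
      lTot ((b, Qb') :: (a, Qa') :: L) = lTot ((a, Qa) :: (b, Qb) :: L) ∧
      lVal M E w ((a, Qa) :: (b, Qb) :: L) ≤ lVal M E w ((b, Qb') :: (a, Qa') :: L) := by
  simp only [lPsd_cons] at h
  obtain ⟨ha, hb, hL⟩ := h
  obtain ⟨A', h1, h2, h3⟩ := exists_reflection (B := M b) (S := lTot L) (A := Qb + lTot L)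
    (T := Qa + (Qb + lTot L)) (hM b) (lTot_psd hL) (by simpa using hb) (by simpa using ha)
  refine ⟨A' - lTot L, Qa + (Qb + lTot L) - A', ?_, ?_, ?_⟩
  · simp only [lPsd_cons]
    exact ⟨h2, h1, hL⟩
  · simp
  · simp only [lVal, lTot_cons, sub_add_cancel, secf]
    have hae := h3 _ (hM a)
    have hee := h3 _ hE
    nlinarith [mul_nonneg (sub_nonneg.2 hab) (sub_nonneg.2 hee),
      mul_nonneg (hw a) (sub_nonneg.2 hae)]

/-- A user whose weight dominates the weights of all users before it can be moved to the head. -/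
lemma exists_move_front (hM : ∀ u, (M u).PosSemidef) (hE : E.PosSemidef) (hw : ∀ u, 0 ≤ w u)
    (x : ι × Matrix n n ℂ) (t : List (ι × Matrix n n ℂ)) (s : List (ι × Matrix n n ℂ))
    (h : lPsd (s ++ x :: t)) (hs : ∀ y ∈ s, w y.1 ≤ w x.1) :
    ∃ (Q : Matrix n n ℂ) (r : List (ι × Matrix n n ℂ)), lPsd ((x.1, Q) :: r) ∧
      r.map Prod.fst = (s ++ t).map Prod.fst ∧
      lTot ((x.1, Q) :: r) = lTot (s ++ x :: t) ∧
      lVal M E w (s ++ x :: t) ≤ lVal M E w ((x.1, Q) :: r) := by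
  induction s with
  | nil => exact ⟨x.2, t, h, rfl, rfl, le_rfl⟩
  | cons y s ih =>
    rw [List.cons_append, lPsd_cons] at h
    obtain ⟨Q, r, h1, h2, h3, h4⟩ := ih h.2 fun z hz => hs z (List.mem_cons_of_mem _ hz)
    obtain ⟨Qa, Qb, k1, k2, k3⟩ := exists_adjacent_swap (a := y.1) (Qa := y.2) hM hE hw
      (lPsd_cons.2 ⟨h.1, h1⟩) (hs y List.mem_cons_self)
    refine ⟨Qb, (y.1, Qa) :: r, k1, by simpa using h2, ?_, ?_⟩
    · rw [k2, lTot_cons, h3, List.cons_append, lTot_cons]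
    · refine le_trans ?_ k3
      rw [List.cons_append, lVal, lVal, h3]
      exact add_le_add_right h4 _

lemma exists_sorted (hM : ∀ u, (M u).PosSemidef) (hE : E.PosSemidef) (hw : ∀ u, 0 ≤ w u)
    (l : List ι) (hl : l.Pairwise fun x y => w y ≤ w x)
    (L : List (ι × Matrix n n ℂ)) (hL : lPsd L) (hp : (L.map Prod.fst).Perm l) :
    ∃ L' : List (ι × Matrix n n ℂ), L'.map Prod.fst = l ∧ lPsd L' ∧ lTot L' = lTot L ∧
      lVal M E w L ≤ lVal M E w L' := by
  induction l generalizing L with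
  | nil =>
    have : L = [] := by simpa using hp
    subst this
    exact ⟨[], rfl, hL, rfl, le_rfl⟩
  | cons x l ih =>
    rw [List.pairwise_cons] at hl
    have hx : x ∈ L.map Prod.fst := hp.symm.subset List.mem_cons_self
    obtain ⟨z, hz, rfl⟩ := List.mem_map.1 hx
    obtain ⟨s, t, rfl⟩ := List.append_of_mem hz
    have hp' : ((s ++ t).map Prod.fst).Perm l := by
      refine List.Perm.cons_inv (a := z.1) (List.Perm.trans ?_ hp)
      simpa using List.perm_middle.symm
    obtain ⟨Q, r, h1, h2, h3, h4⟩ := exists_move_front hM hE hw z t s hL fun y hy =>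
      hl.1 _ (hp'.subset (List.mem_map_of_mem (List.mem_append_left _ hy)))
    obtain ⟨L', k1, k2, k3, k4⟩ := ih hl.2 r (lPsd_cons.1 h1).2 (h2 ▸ hp')
    refine ⟨(z.1, Q) :: L', by simp [k1], lPsd_cons.2 ⟨(lPsd_cons.1 h1).1, k2⟩, ?_, ?_⟩
    · rw [← h3, lTot_cons, lTot_cons, k3]
    · refine h4.trans ?_
      rw [lVal, lVal, k3]
      exact add_le_add_right k4 _

/-- Negative rates can be removed, keeping the order, without lowering the weighted sum rate or
raising the total covariance. Going from the tail to the head, the covariance that has been freed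
behind the current user is moved in front of it by reflecting with respect to the eavesdropper
channel, which does not lower the rate of that user; a user whose rate was negative is instead
given covariance zero. -/
lemma exists_nonneg_rates (hM : ∀ u, (M u).PosSemidef) (hE : E.PosSemidef) (hw : ∀ u, 0 ≤ w u)
    (L : List (ι × Matrix n n ℂ)) (hL : lPsd L) :
    ∃ L' : List (ι × Matrix n n ℂ), L'.map Prod.fst = L.map Prod.fst ∧ lPsd L' ∧
      (lTot L - lTot L').PosSemidef ∧ lNonneg M E L' ∧ lVal M E w L ≤ lVal M E w L' := by
  induction L with
  | nil => exact ⟨[], rfl, hL, by simpa using PosSemidef.zero, trivial, le_rfl⟩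
  | cons x L ih =>
    rw [lPsd_cons] at hL
    obtain ⟨L', h1, h2, h3, h4, h5⟩ := ih hL.2
    obtain ⟨A', k1, k2, k3⟩ := exists_reflection (B := E) (S := lTot L') (A := lTot L)
      (T := x.2 + lTot L) hE (lTot_psd h2) h3 (by simpa using hL.1)
    have k4 : secf M E x.1 (x.2 + lTot L) - secf M E x.1 (lTot L) ≤
        secf M E x.1 A' - secf M E x.1 (lTot L') := by
      have := k3 _ (hM x.1)
      simp only [secf]
      linarith
    rcases le_total 0 (secf M E x.1 (x.2 + lTot L) - secf M E x.1 (lTot L)) with h0 | h0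
    · refine ⟨(x.1, A' - lTot L') :: L', by simp [h1], lPsd_cons.2 ⟨k1, h2⟩, ?_, ⟨?_, h4⟩, ?_⟩
      · simpa using k2
      · simpa using h0.trans k4
      · simp only [lVal, sub_add_cancel]
        exact add_le_add (mul_le_mul_of_nonneg_left k4 (hw _)) h5
    · refine ⟨(x.1, 0) :: L', by simp [h1], lPsd_cons.2 ⟨PosSemidef.zero, h2⟩, ?_,
        ⟨by simp, h4⟩, ?_⟩
      · have := hL.1.add h3
        simpa [add_sub_assoc] using this
      · simp only [lVal, zero_add, sub_self, mul_zero]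
        nlinarith [hw x.1]

lemma lVal_nonneg (hw : ∀ u, 0 ≤ w u) {L : List (ι × Matrix n n ℂ)}
    (h : lNonneg M E L) : 0 ≤ lVal M E w L := by
  induction L with
  | nil => exact le_rfl
  | cons x L ih => exact add_nonneg (mul_nonneg (hw _) h.1) (ih h.2)

/-- Under the power constraint `P`, the rate of user `u` is at most `tr (M u) * P`, since
`log det (1 + C X Cᴴ) ≤ tr (C X Cᴴ)`. -/
lemma lVal_le (hM : ∀ u, (M u).PosSemidef) (hE : E.PosSemidef) (hw : ∀ u, 0 ≤ w u) {P : ℝ}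
    (L : List (ι × Matrix n n ℂ)) (hL : lPsd L) (hP : (lTot L).trace.re ≤ P) :
    lVal M E w L ≤ ((L.map Prod.fst).map fun u => w u * ((M u).trace.re * P)).sum := by
  induction L with
  | nil => simp [lVal]
  | cons x L ih =>
    have hT := lTot_psd hL
    rw [lPsd_cons] at hL
    have hS := lTot_psd hL.2
    have htr : 0 ≤ x.2.trace.re := (Complex.le_def.1 hL.1.trace_nonneg).1
    have hP' : (lTot L).trace.re ≤ P := by
      rw [lTot_cons, trace_add, Complex.add_re] at hP
      linarith
    rw [lTot_cons] at hT hP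
    have hMt : 0 ≤ (M x.1).trace.re := (Complex.le_def.1 (hM x.1).trace_nonneg).1
    have b1 := gld_le (hM x.1) hT
    have b2 := gld_nonneg (hM x.1) hS
    have b3 := gld_mono hE hS (Y := x.2 + lTot L) (by simpa using hL.1)
    have b4 := mul_le_mul_of_nonneg_left hP hMt
    simp only [lVal, List.map_cons, List.sum_cons]
    refine add_le_add (mul_le_mul_of_nonneg_left ?_ (hw _)) (ih hL.2 hP')
    simp only [secf]
    linarith

lemma lVal_ofFn {m : ℕ} (c : Fin m → ι × Matrix n n ℂ) :
    lVal M E w (List.ofFn c) = ∑ k, w (c k).1 *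
      (secf M E (c k).1 (∑ j ∈ Finset.univ.filter (fun j => k ≤ j), (c j).2) -
        secf M E (c k).1 (∑ j ∈ Finset.univ.filter (fun j => k < j), (c j).2)) := by
  induction m with
  | zero => simp [lVal]
  | succ m ih =>
    rw [List.ofFn_succ, lVal, ih, Fin.sum_univ_succ, lTot_ofFn]
    simp [Finset.sum_filter, Fin.sum_univ_succ]

lemma lNonneg_ofFn {m : ℕ} (c : Fin m → ι × Matrix n n ℂ) :
    lNonneg M E (List.ofFn c) ↔ ∀ k, 0 ≤
      secf M E (c k).1 (∑ j ∈ Finset.univ.filter (fun j => k ≤ j), (c j).2) -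
        secf M E (c k).1 (∑ j ∈ Finset.univ.filter (fun j => k < j), (c j).2) := by
  induction m with
  | zero => simp [lNonneg]
  | succ m ih =>
    rw [List.ofFn_succ, lNonneg, ih, Fin.forall_fin_succ, lTot_ofFn]
    simp [Finset.sum_filter, Fin.sum_univ_succ]

end Lists

/-! ### Translation to encoding orders -/

lemma logdetI_eq {m nt : ℕ} (H : Matrix (Fin m) (Fin nt) ℂ) {X : Matrix (Fin nt) (Fin nt) ℂ}
    (hX : X.PosSemidef) : logdetI (H * X * Hᴴ) = gld (Hᴴ * H) X := by
  have h := (PosSemidef.one.add (hX.mul_mul_conjTranspose_same H)).det_nonneg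
  rw [logdetI, gld, Matrix.mul_assoc Hᴴ, det_one_add_mul_comm Hᴴ]
  conv_lhs => rw [← Complex.norm_of_nonneg' h, Complex.ofReal_re]

lemma secrecyRate_eq {K nt ne : ℕ} {n : Fin K → ℕ}
    (H : ∀ k : Fin K, Matrix (Fin (n k)) (Fin nt) ℂ)
    (G : Matrix (Fin ne) (Fin nt) ℂ) (π : Equiv.Perm (Fin K))
    (Q : Fin K → Matrix (Fin nt) (Fin nt) ℂ) (hQ : ∀ k, (Q k).PosSemidef) (k : Fin K) :
    secrecyRate H G π Q k =
      secf (fun u => (H u)ᴴ * H u) (Gᴴ * G) (π k)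
          (∑ j ∈ Finset.univ.filter (fun j => k ≤ j), Q (π j)) -
        secf (fun u => (H u)ᴴ * H u) (Gᴴ * G) (π k)
          (∑ j ∈ Finset.univ.filter (fun j => k < j), Q (π j)) := by
  have h (s : Finset (Fin K)) : (∑ j ∈ s, Q (π j)).PosSemidef :=
    posSemidef_sum _ fun j _ => hQ _
  rw [secrecyRate, logdetI_eq _ (h _), logdetI_eq _ (h _), logdetI_eq _ (h _),
    logdetI_eq _ (h _), secf, secf]
  ring

/-- Feasible points of the optimization problem for the order `π` correspond to lists whose users,
read from the head, are `π 0, π 1, …`. -/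
lemma mem_iff_list {K nt ne : ℕ} {n : Fin K → ℕ}
    (H : ∀ k : Fin K, Matrix (Fin (n k)) (Fin nt) ℂ)
    (G : Matrix (Fin ne) (Fin nt) ℂ) (P : ℝ) (w : Fin K → ℝ) (π : Equiv.Perm (Fin K)) (r : ℝ) :
    (∃ Q : Fin K → Matrix (Fin nt) (Fin nt) ℂ,
      (∀ k, (Q k).PosSemidef) ∧ (∑ k, ((Q k).trace).re) ≤ P ∧
      (∀ k, 0 ≤ secrecyRate H G π Q k) ∧
      r = ∑ k, w (π k) * secrecyRate H G π Q k) ↔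
    ∃ L : List (Fin K × Matrix (Fin nt) (Fin nt) ℂ), L.map Prod.fst = List.ofFn π ∧ lPsd L ∧
      (lTot L).trace.re ≤ P ∧ lNonneg (fun u => (H u)ᴴ * H u) (Gᴴ * G) L ∧
      r = lVal (fun u => (H u)ᴴ * H u) (Gᴴ * G) w L := by
  have tr (Q : Fin K → Matrix (Fin nt) (Fin nt) ℂ) :
      (∑ k, Q (π k)).trace.re = ∑ k, (Q k).trace.re := by
    rw [Equiv.sum_comp π Q, trace_sum, Complex.re_sum]
  constructor
  · rintro ⟨Q, hQ, hP, hR, rfl⟩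
    simp only [secrecyRate_eq H G π Q hQ] at hR ⊢
    refine ⟨List.ofFn fun k => (π k, Q (π k)), ?_, ?_, ?_, ?_, ?_⟩
    · simp [List.map_ofFn, Function.comp_def]
    · intro x hx
      obtain ⟨k, rfl⟩ := (List.mem_ofFn' _ _).1 hx
      exact hQ _
    · rw [lTot_ofFn, tr]; exact hP
    · rw [lNonneg_ofFn]; exact hR
    · rw [lVal_ofFn]
  · rintro ⟨L, hfst, hpsd, hP, hN, rfl⟩
    have hlen : L.length = K := by simpa using congrArg List.length hfst
    obtain ⟨c, rfl⟩ : ∃ c : Fin K → Fin K × Matrix (Fin nt) (Fin nt) ℂ, L = List.ofFn c := by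
      refine ⟨fun k => L.get (Fin.cast hlen.symm k), ?_⟩
      refine List.ext_getElem (by simp [hlen]) fun i h1 h2 => by simp
    rw [List.map_ofFn, List.ofFn_inj] at hfst
    have hc : ∀ k, (c k).1 = π k := fun k => congrFun hfst k
    have hQ : ∀ k, ((c (π.symm k)).2).PosSemidef := fun k =>
      hpsd _ ((List.mem_ofFn' _ _).2 ⟨_, rfl⟩)
    refine ⟨fun u => (c (π.symm u)).2, hQ, ?_, ?_, ?_⟩
    · rw [← tr]; simpa [lTot_ofFn] using hP
    · intro k
      rw [secrecyRate_eq H G π _ hQ]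
      simpa [hc] using (lNonneg_ofFn c).1 hN k
    · simp only [secrecyRate_eq H G π _ hQ, lVal_ofFn, hc, Equiv.symm_apply_apply]

/-- The descending-weight encoding order maximizes the weighted secrecy sum rate. -/
theorem optimal_encoding_order (K nt ne : ℕ) (hK : 1 ≤ K) (n : Fin K → ℕ)
    (H : ∀ k : Fin K, Matrix (Fin (n k)) (Fin nt) ℂ)
    (G : Matrix (Fin ne) (Fin nt) ℂ) (P : ℝ) (hP : 0 ≤ P)
    (w : Fin K → ℝ) (hw : ∀ k, 0 ≤ w k)
    (πs : Equiv.Perm (Fin K))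
    (hdesc : ∀ k l : Fin K, k ≤ l → w (πs l) ≤ w (πs k))
    (σ : Equiv.Perm (Fin K)) :
    phi H G P w σ ≤ phi H G P w πs := by
  have hM : ∀ u, ((H u)ᴴ * H u).PosSemidef := fun u => posSemidef_conjTranspose_mul_self _
  have hE : (Gᴴ * G).PosSemidef := posSemidef_conjTranspose_mul_self _
  unfold phi
  simp only [mem_iff_list]
  have hbdd : BddAbove {r : ℝ | ∃ L : List (Fin K × Matrix (Fin nt) (Fin nt) ℂ),
      L.map Prod.fst = List.ofFn πs ∧ lPsd L ∧ (lTot L).trace.re ≤ P ∧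
      lNonneg (fun u => (H u)ᴴ * H u) (Gᴴ * G) L ∧
      r = lVal (fun u => (H u)ᴴ * H u) (Gᴴ * G) w L} := by
    refine ⟨((List.ofFn πs).map fun u => w u * (((H u)ᴴ * H u).trace.re * P)).sum, ?_⟩
    rintro r ⟨L, hfst, hpsd, htr, -, rfl⟩
    rw [← hfst]
    exact lVal_le hM hE hw L hpsd htr
  refine Real.sSup_le ?_ (Real.sSup_nonneg ?_)
  · rintro r ⟨L, hfst, hpsd, htr, -, rfl⟩
    have hperm : (L.map Prod.fst).Perm (List.ofFn πs) := by
      have e : List.ofFn σ = List.ofFn (πs ∘ (σ.trans πs.symm)) := by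
        congr 1; funext k; simp
      rw [hfst, e]
      exact Equiv.Perm.ofFn_comp_perm _ _
    have hsorted : (List.ofFn πs).Pairwise fun x y => w y ≤ w x :=
      List.pairwise_ofFn.2 fun k l hkl => hdesc k l hkl.le
    obtain ⟨L₁, h1, h2, h3, h4⟩ := exists_sorted hM hE hw _ hsorted L hpsd hperm
    obtain ⟨L₂, k1, k2, k3, k4, k5⟩ := exists_nonneg_rates hM hE hw L₁ h2
    refine (h4.trans k5).trans (le_csSup hbdd ⟨L₂, k1.trans h1, k2, ?_, k4, rfl⟩)
    have := (Complex.le_def.1 k3.trace_nonneg).1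
    rw [trace_sub, Complex.sub_re, Complex.zero_re, h3] at this
    linarith
  · rintro r ⟨L, -, -, -, hN, rfl⟩
    exact lVal_nonneg hw hN
end

section
/- Fix K ≥ 1, channel matrices H_k ∈ ℂ^{n_k×n_t} (k = 1,…,K) and G ∈ ℂ^{n_e×n_t}, a power budget P ≥ 0, and equal weights w_1 = w_2 = … = w_K = w ≥ 0. For a permutation σ of {1,…,K}, let φ_σ be the supremum of Σ_{k=1}^K w·R_{σ_k} over all K-tuples (Q_1,…,Q_K) of Hermitian positive semidefinite n_t×n_t complex matrices satisfying Σ_{k=1}^K tr(Q_k) ≤ P and R_{σ_k} ≥ 0 for every k. Then φ_σ = φ_τ for any two permutations σ and τ of {1,…,K}; i.e., all encoding orders yield the same optimal secrecy sum rate. -/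
/-!
The secrecy sum rate is compared between orders after listing the covariances by encoding position
(`posRate`). Two facts make the order irrelevant.

*Dropping the constraints `R ≥ 0`.* Maximize the sum rate subject only to the power budget; a
maximizer `q` exists by compactness. Its first-order conditions (`exists_multiplier`) give `c ≥ 0`
such that, with `D j` the gradient in `q j`, the slack `Φ j = c - D j` is positive semidefinite and
annihilates the range of `q j`. Write `∇f k`, `∇g` for the gradients of the log-determinants of the
user at position `k` and of the eavesdropper, and `S k` for the sum of the covariances from position
`k` on. Then `∇f k (S k) + Φ k - ∇g (S k)` is positive semidefinite for every `k`: at the first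
position it equals `c`, and `rate_step` carries the property from `S k` to `S (k + 1)`, where it is
the same statement for the next position because `D` telescopes. The same lemma shows that the rate
at position `k` is nonnegative. So the maximizer is feasible for the constrained problem
(`posRate_nonneg_of_max`, `phi_eq_mul_max`).

*Reordering.* Without the sign constraints, two adjacent users can be exchanged, keeping the total
covariance and not lowering the sum rate (`exists_adjacent_swap`). The eavesdropper terms telescope
in the sum rate, so the pair can be treated as in a broadcast channel without secrecy: factor
the two covariances as `R Z Rᴴ` and `R (1 - Z) Rᴴ`, diagonalize the two channel matrices seen
through `R` simultaneously by congruence, and let the new `Z` project onto the directions in which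
the first user is the stronger one (`pencil_upper`, `pencil_attain`). Adjacent transpositions
generate all permutations (`exists_reorder`).
-/

open Matrix Finset ComplexOrder

/-! ### Determinants and pencils of positive semidefinite matrices -/

section MatrixFacts

variable {m n : Type*} [Fintype m] [Fintype n] [DecidableEq m] [DecidableEq n]

lemma exists_eq_mul_conjTranspose {S : Matrix n n ℂ} (hS : S.PosSemidef) :
    ∃ L : Matrix n n ℂ, S = L * Lᴴ := by
  open scoped MatrixOrder in
  obtain ⟨B, hB⟩ := CStarAlgebra.nonneg_iff_eq_star_mul_self.mp hS.nonneg
  exact ⟨Bᴴ, by simpa [star_eq_conjTranspose] using hB⟩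

lemma posDef_one_add {n : Type*} [DecidableEq n] {B : Matrix n n ℂ} (hB : B.PosSemidef) : (1 + B).PosDef :=
  PosDef.one.add_posSemidef hB

lemma one_le_det_one_add {B : Matrix n n ℂ} (hB : B.PosSemidef) : 1 ≤ (1 + B).det := by
  have h := hB.1.spectral_theorem
  rw [Unitary.conjStarAlgAut_apply] at h
  have hU : star (hB.1.eigenvectorUnitary : Matrix n n ℂ) * (hB.1.eigenvectorUnitary : Matrix n n ℂ)
      = 1 := Unitary.coe_star_mul_self _
  rw [h, det_one_add_mul_comm, ← mul_assoc, hU, one_mul, ← diagonal_one, diagonal_add,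
    det_diagonal]
  have : ∀ i ∈ (Finset.univ : Finset n), (1 : ℂ) ≤ 1 + (RCLike.ofReal ∘ hB.1.eigenvalues) i := by
    intro i _
    have := hB.eigenvalues_nonneg i
    simpa using this
  calc (1 : ℂ) = ∏ i : n, (1 : ℂ) := by simp
    _ ≤ _ := Finset.prod_le_prod (fun _ _ => zero_le_one) this

/-- The determinant is monotone in the Loewner order: `det (A + L Lᴴ) = det A * det (1 + Lᴴ A⁻¹ L)`. -/
lemma det_le_det_add {A E : Matrix n n ℂ} (hA : A.PosDef) (hE : E.PosSemidef) :
    A.det ≤ (A + E).det := by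
  obtain ⟨L, rfl⟩ := exists_eq_mul_conjTranspose hE
  rw [det_add_mul _ _ ((isUnit_iff_isUnit_det _).1 hA.isUnit)]
  exact le_mul_of_one_le_right hA.det_pos.le
    (one_le_det_one_add (hA.inv.posSemidef.conjTranspose_mul_mul_same L))

lemma det_le_det_of_sub {A B : Matrix n n ℂ} (hA : A.PosDef) (hE : (B - A).PosSemidef) :
    A.det ≤ B.det := by
  simpa using det_le_det_add hA hE

/-- Simultaneous diagonalization by congruence. -/
lemma exists_pencil {A B : Matrix n n ℂ} (hA : A.PosDef) (hB : B.PosDef) :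
    ∃ (C : Matrix n n ℂ) (d : n → ℝ), IsUnit C ∧ Cᴴ * A * C = 1 ∧
      Cᴴ * B * C = diagonal (fun i => (d i : ℂ)) ∧ ∀ i, 0 < d i := by
  obtain ⟨L, hL⟩ := exists_eq_mul_conjTranspose hA.inv.posSemidef
  have hAu : IsUnit A.det := (isUnit_iff_isUnit_det _).1 hA.isUnit
  have h1 : L * (Lᴴ * A) = 1 := by rw [← mul_assoc, ← hL, nonsing_inv_mul _ hAu]
  have h2 : Lᴴ * A * L = 1 := mul_eq_one_comm.1 h1
  have hLu : IsUnit L := IsUnit.of_mul_eq_one _ h1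
  have hBL : (Lᴴ * B * L).PosDef := by
    have := (Matrix.IsUnit.posDef_star_left_conjugate_iff hLu).2 hB
    simpa [star_eq_conjTranspose] using this
  set U : Matrix n n ℂ := (hBL.1.eigenvectorUnitary : Matrix n n ℂ) with hUdef
  have hU : Uᴴ * U = 1 := Unitary.coe_star_mul_self hBL.1.eigenvectorUnitary
  have hU' : U * Uᴴ = 1 := mul_eq_one_comm.1 hU
  have h := hBL.1.spectral_theorem
  rw [Unitary.conjStarAlgAut_apply, star_eq_conjTranspose, ← hUdef] at h
  refine ⟨L * U, hBL.1.eigenvalues, hLu.mul (IsUnit.of_mul_eq_one _ hU'), ?_, ?_,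
    hBL.eigenvalues_pos⟩
  · calc (L * U)ᴴ * A * (L * U) = Uᴴ * (Lᴴ * A * L) * U := by
          simp only [conjTranspose_mul, mul_assoc]
      _ = 1 := by rw [h2, mul_one, hU]
  · calc (L * U)ᴴ * B * (L * U) = Uᴴ * (Lᴴ * B * L) * U := by
          simp only [conjTranspose_mul, mul_assoc]
      _ = (Uᴴ * U) * diagonal (RCLike.ofReal ∘ hBL.1.eigenvalues) * (Uᴴ * U) := by
          conv_lhs => rw [h]
          simp only [mul_assoc]
      _ = _ := by rw [hU, one_mul, mul_one]; rfl

/-- Both conditions say that the block matrix with rows `1, V` and `Vᴴ, G` is positive semidefinite. -/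
lemma posSemidef_one_sub_schur {G : Matrix n n ℂ} {V : Matrix m n ℂ} (hG : G.PosDef)
    (h : (G - Vᴴ * V).PosSemidef) : (1 - V * G⁻¹ * Vᴴ).PosSemidef := by
  obtain ⟨_⟩ := hG.isUnit.nonempty_invertible
  let _ : Invertible (1 : Matrix m m ℂ) := invertibleOne
  rw [← PosDef.fromBlocks₂₂ _ _ hG]
  rw [PosDef.fromBlocks₁₁ _ _ PosDef.one]
  simpa using h

/-- For an orthogonal projection `Z`, the quotient `det (1 + Z B) / det (1 + Z A)` is at most the
product of the generalized eigenvalues `d i` that exceed `1`. -/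
lemma pencil_upper {A B C Z : Matrix n n ℂ} {d : n → ℝ}
    (hA : A.PosSemidef) (hB : B.PosSemidef) (hC : IsUnit C)
    (hCA : Cᴴ * (1 + A) * C = 1) (hCB : Cᴴ * (1 + B) * C = diagonal (fun i => (d i : ℂ)))
    (hZh : Zᴴ = Z) (hZ : Z * Z = Z) :
    (1 + Z * B).det ≤ (∏ i, (max 1 (d i) : ℝ) : ℝ) * (1 + Z * A).det := by
  have hCu : IsUnit C.det := (isUnit_iff_isUnit_det _).1 hC
  have hCi : C * C⁻¹ = 1 := mul_nonsing_inv _ hCu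
  have hCi' : (C⁻¹)ᴴ * Cᴴ = 1 := by rw [← conjTranspose_mul, hCi, conjTranspose_one]
  have hWA : 1 + A = (C⁻¹)ᴴ * C⁻¹ := by
    calc 1 + A = ((C⁻¹)ᴴ * Cᴴ) * (1 + A) * (C * C⁻¹) := by rw [hCi, hCi', one_mul, mul_one]
      _ = (C⁻¹)ᴴ * (Cᴴ * (1 + A) * C) * C⁻¹ := by simp only [mul_assoc]
      _ = _ := by rw [hCA, mul_one]
  have hWB : 1 + B = (C⁻¹)ᴴ * diagonal (fun i => (d i : ℂ)) * C⁻¹ := by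
    calc 1 + B = ((C⁻¹)ᴴ * Cᴴ) * (1 + B) * (C * C⁻¹) := by rw [hCi, hCi', one_mul, mul_one]
      _ = (C⁻¹)ᴴ * (Cᴴ * (1 + B) * C) * C⁻¹ := by simp only [mul_assoc]
      _ = _ := by rw [hCB]
  set V := C⁻¹ * Z with hV
  have hVh : Vᴴ = Z * (C⁻¹)ᴴ := by rw [hV, conjTranspose_mul, hZh]
  have hdet : ∀ X : Matrix n n ℂ, (1 + Z * X).det = (1 + Z * X * Z).det := by
    intro X
    conv_lhs => rw [← hZ, mul_assoc, det_one_add_mul_comm]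
  have hexp : ∀ X : Matrix n n ℂ, 1 + Z * X * Z = (1 - Z) + Z * (1 + X) * Z := by
    intro X
    rw [mul_add, add_mul, mul_one, hZ]; abel
  have hGA : 1 + Z * A * Z = (1 - Z) + Vᴴ * V := by
    rw [hexp, hWA, hVh, hV]; simp only [mul_assoc]
  set G := 1 + Z * A * Z with hGdef
  have hGB : 1 + Z * B * Z = G + Vᴴ * diagonal (fun i => ((d i - 1 : ℝ) : ℂ)) * V := by
    have : diagonal (fun i => ((d i - 1 : ℝ) : ℂ)) = diagonal (fun i => (d i : ℂ)) - 1 := by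
      rw [← diagonal_one, diagonal_sub]; congr 1; ext i; simp
    rw [this, hexp, hWB, hGA, mul_sub, sub_mul, mul_one, hVh, hV]
    simp only [mul_assoc]; abel
  have hG : G.PosDef := by
    apply posDef_one_add
    have := hA.conjTranspose_mul_mul_same Z
    rwa [hZh] at this
  have h1Z : (1 - Z).PosSemidef := by
    have : (1 - Z) = (1 - Z)ᴴ * (1 - Z) := by
      rw [conjTranspose_sub, conjTranspose_one, hZh, mul_sub, sub_mul, sub_mul, hZ]; simp
    rw [this]; exact posSemidef_conjTranspose_mul_self _
  have hS := posSemidef_one_sub_schur (V := V) hG (by rw [hGA]; simpa using h1Z)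
  set s : Matrix n n ℂ := diagonal (fun i => ((Real.sqrt (max 1 (d i) - 1) : ℝ) : ℂ)) with hs
  have hsh : sᴴ = s := by
    rw [hs, diagonal_conjTranspose]; congr 1; ext i; simp
  have hss : s * s = diagonal (fun i => ((max 1 (d i) - 1 : ℝ) : ℂ)) := by
    rw [hs, diagonal_mul_diagonal]; congr 1; ext i
    rw [← Complex.ofReal_mul, Real.mul_self_sqrt (by simp)]
  rw [hdet B, hdet A, ← hGdef, hGB]
  have hBG : (G + Vᴴ * diagonal (fun i => ((d i - 1 : ℝ) : ℂ)) * V).PosDef := by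
    rw [← hGB]; apply posDef_one_add
    have := hB.conjTranspose_mul_mul_same Z
    rwa [hZh] at this
  calc _ ≤ (G + (Vᴴ * s) * (s * V)).det := by
        apply det_le_det_of_sub hBG
        have : G + (Vᴴ * s) * (s * V) - (G + Vᴴ * diagonal (fun i => ((d i - 1 : ℝ) : ℂ)) * V)
            = Vᴴ * diagonal (fun i => ((max 1 (d i) - d i : ℝ) : ℂ)) * V := by
          have h3 : diagonal (fun i => ((max 1 (d i) - d i : ℝ) : ℂ))
              = s * s - diagonal (fun i => ((d i - 1 : ℝ) : ℂ)) := by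
            rw [hss, diagonal_sub]; congr 1; ext i; push_cast; ring
          rw [h3, mul_sub, sub_mul]; simp only [mul_assoc]; abel
        rw [this]
        apply PosSemidef.conjTranspose_mul_mul_same
        apply PosSemidef.diagonal
        intro i
        simp only [Pi.zero_apply, Complex.zero_le_real, sub_nonneg]
        exact le_max_right _ _
    _ = G.det * (1 + s * (V * G⁻¹ * Vᴴ) * s).det := by
        rw [det_add_mul _ _ ((isUnit_iff_isUnit_det _).1 hG.isUnit)]
        simp only [mul_assoc]
    _ ≤ G.det * (1 + s * s).det := by
        apply mul_le_mul_of_nonneg_left _ hG.det_pos.le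
        apply det_le_det_of_sub
        · apply posDef_one_add
          have h4 : (V * G⁻¹ * Vᴴ).PosSemidef :=
            hG.inv.posSemidef.mul_mul_conjTranspose_same V
          have := h4.conjTranspose_mul_mul_same s
          rwa [hsh] at this
        · have := hS.conjTranspose_mul_mul_same s
          rw [hsh, mul_sub, sub_mul, mul_one] at this
          simpa using this
    _ = _ := by
        rw [mul_comm, hss, ← diagonal_one, diagonal_add, det_diagonal]
        congr 1
        push_cast
        exact Finset.prod_congr rfl fun i _ => by ring

/-- For `Z` the orthogonal projection onto the span of the generalized eigenvectors with `d i < 1`, the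
quotient `det (1 + Z B) / det (1 + Z A)` is the product of these `d i`. -/
lemma pencil_attain {A B C : Matrix n n ℂ} {d : n → ℝ}
    (hC : IsUnit C)
    (hCA : Cᴴ * (1 + A) * C = 1) (hCB : Cᴴ * (1 + B) * C = diagonal (fun i => (d i : ℂ))) :
    ∃ Z : Matrix n n ℂ, Z.PosSemidef ∧ (1 - Z).PosSemidef ∧
      (∏ i, (max 1 (d i) : ℝ) : ℝ) * (1 + Z * B).det = (∏ i, d i : ℝ) * (1 + Z * A).det := by
  classical
  let J := {i : n // d i < 1}
  set CJ : Matrix n J ℂ := C.submatrix id Subtype.val with hCJ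
  have hsub : ∀ X : Matrix n n ℂ, CJᴴ * X * CJ = (Cᴴ * X * C).submatrix Subtype.val Subtype.val := by
    intro X; ext i j; simp [Matrix.mul_apply, hCJ]
  have hGr : (CJᴴ * CJ).PosDef := by
    have h1 : (Cᴴ * C).PosDef := by
      have := (Matrix.IsUnit.posDef_star_left_conjugate_iff hC).2 (PosDef.one (R := ℂ))
      simpa [star_eq_conjTranspose] using this
    have := hsub 1
    rw [Matrix.mul_one, Matrix.mul_one] at this
    rw [this]
    exact h1.submatrix Subtype.val_injective
  have hGu : IsUnit (CJᴴ * CJ).det := (isUnit_iff_isUnit_det _).1 hGr.isUnit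
  set Γ := (CJᴴ * CJ)⁻¹ with hΓ
  have hZp : (CJ * Γ * CJᴴ).PosSemidef := hGr.inv.posSemidef.mul_mul_conjTranspose_same CJ
  have hZ2 : (CJ * Γ * CJᴴ) * (CJ * Γ * CJᴴ) = CJ * Γ * CJᴴ := by
    calc _ = CJ * (Γ * (CJᴴ * CJ)) * Γ * CJᴴ := by simp only [Matrix.mul_assoc]
      _ = _ := by rw [hΓ, nonsing_inv_mul _ hGu, Matrix.mul_one]
  have hdet : ∀ X : Matrix n n ℂ, (1 + CJ * Γ * CJᴴ * X).det
      = Γ.det * ((Cᴴ * (1 + X) * C).submatrix (Subtype.val : J → n) Subtype.val).det := by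
    intro X
    rw [← hsub, ← det_mul]
    calc _ = (1 + CJ * (Γ * CJᴴ * X)).det := by simp only [Matrix.mul_assoc]
      _ = (1 + (Γ * CJᴴ * X) * CJ).det := det_one_add_mul_comm _ _
      _ = _ := by
        congr 1
        rw [Matrix.mul_add, Matrix.add_mul, Matrix.mul_one, Matrix.mul_add, hΓ, nonsing_inv_mul _ hGu]
        simp only [Matrix.mul_assoc]
  refine ⟨CJ * Γ * CJᴴ, hZp, ?_, ?_⟩
  · set Z := CJ * Γ * CJᴴ
    have : (1 - Z) = (1 - Z)ᴴ * (1 - Z) := by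
      rw [conjTranspose_sub, conjTranspose_one, hZp.1, mul_sub, sub_mul, sub_mul, hZ2]; simp
    rw [this]; exact posSemidef_conjTranspose_mul_self _
  · rw [hdet, hdet, hCA, hCB]
    have e1 : ((1 : Matrix n n ℂ).submatrix (Subtype.val : J → n) Subtype.val) = 1 :=
      submatrix_one _ Subtype.val_injective
    have e2 : ((diagonal (fun i => (d i : ℂ))).submatrix (Subtype.val : J → n) Subtype.val)
        = diagonal (fun i : J => (d i : ℂ)) := submatrix_diagonal _ _ Subtype.val_injective
    rw [e1, e2, det_one, det_diagonal]
    have key : (∏ i, max 1 (d i)) * ∏ i : J, d i = ∏ i, d i := by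
      have : ∏ i : J, d i = ∏ i, if d i < 1 then d i else 1 := by
        rw [← Finset.prod_filter]
        exact (Finset.prod_subtype _ (by simp) _).symm
      rw [this, ← Finset.prod_mul_distrib]
      refine Finset.prod_congr rfl fun i _ => ?_
      split_ifs with h
      · rw [max_eq_left h.le, one_mul]
      · rw [max_eq_right (not_lt.1 h), mul_one]
    rw [← key]; push_cast; ring

end MatrixFacts

/-! ### Exchanging two users -/

section Gradient

variable {m n : Type*} [Fintype m] [Fintype n] [DecidableEq m] [DecidableEq n]

/-- The gradient of `S ↦ log det (1 + H S Hᴴ)` for the trace pairing. -/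
noncomputable def logdetGrad (H : Matrix m n ℂ) (S : Matrix n n ℂ) : Matrix n n ℂ :=
  Hᴴ * (1 + H * S * Hᴴ)⁻¹ * H

lemma posDef_one_add_conj {m n : Type*} [Fintype m] [Fintype n] [DecidableEq m]
    (H : Matrix m n ℂ) {S : Matrix n n ℂ} (hS : S.PosSemidef) :
    (1 + H * S * Hᴴ).PosDef :=
  posDef_one_add (hS.mul_mul_conjTranspose_same H)

lemma logdetGrad_posSemidef {m n : Type*} [Fintype m] [Fintype n] [DecidableEq m]
    (H : Matrix m n ℂ) {S : Matrix n n ℂ} (hS : S.PosSemidef) :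
    (logdetGrad H S).PosSemidef :=
  (posDef_one_add_conj H hS).inv.posSemidef.conjTranspose_mul_mul_same H

/-- Adding `Y` to the covariance turns the channel `H` into one with Gram matrix `logdetGrad H S`. -/
lemma det_add_eq (H : Matrix m n ℂ) {S : Matrix n n ℂ} (hS : S.PosSemidef) (Y : Matrix n n ℂ) :
    (1 + H * (S + Y) * Hᴴ).det = (1 + H * S * Hᴴ).det * (1 + logdetGrad H S * Y).det := by
  have hu := (isUnit_iff_isUnit_det _).1 (posDef_one_add_conj H hS).isUnit
  have := det_add_mul (A := 1 + H * S * Hᴴ) (H * Y) Hᴴ hu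
  rw [logdetGrad, Matrix.mul_add, Matrix.add_mul, ← add_assoc, this]
  simp only [Matrix.mul_assoc]

lemma det_one_add_mul_pos {M Y : Matrix n n ℂ} (hM : M.PosSemidef) (hY : Y.PosSemidef) :
    0 < (1 + M * Y).det := by
  obtain ⟨L, rfl⟩ := exists_eq_mul_conjTranspose hY
  rw [← Matrix.mul_assoc, det_one_add_mul_comm, ← Matrix.mul_assoc]
  exact (posDef_one_add (hM.conjTranspose_mul_mul_same L)).det_pos

end Gradient

section Swap

lemma logdetI_add {m nt : ℕ} (H : Matrix (Fin m) (Fin nt) ℂ) {S Y : Matrix (Fin nt) (Fin nt) ℂ}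
    (hS : S.PosSemidef) (hY : Y.PosSemidef) :
    logdetI (H * (S + Y) * Hᴴ)
      = logdetI (H * S * Hᴴ) + Real.log ((1 + logdetGrad H S * Y).det.re) := by
  have h1 := Complex.pos_iff.1 (posDef_one_add_conj H hS).det_pos
  have h2 := Complex.pos_iff.1 (det_one_add_mul_pos (logdetGrad_posSemidef H hS) hY)
  unfold logdetI
  rw [det_add_eq H hS, Complex.mul_re, ← h1.2, ← h2.2, mul_zero, sub_zero,
    Real.log_mul h1.1.ne' h2.1.ne']

/-- Exchanging the roles of `A` and `B`: the old split `q₂` is bounded through `pencil_upper` and the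
new one `q₂'` comes from `pencil_attain`, both applied to `Rᴴ A R` and `Rᴴ B R` where
`q₁ + q₂ = R Rᴴ`. The inequality is the determinant form of `exists_swap_logdet`. -/
lemma exists_swap_det {nt : ℕ} {A B q₁ q₂ : Matrix (Fin nt) (Fin nt) ℂ}
    (hA : A.PosSemidef) (hB : B.PosSemidef) (h₁ : q₁.PosSemidef) (h₂ : q₂.PosSemidef) :
    ∃ q₁' q₂' : Matrix (Fin nt) (Fin nt) ℂ, q₁'.PosSemidef ∧ q₂'.PosSemidef ∧
      q₁' + q₂' = q₁ + q₂ ∧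
      (1 + A * (q₁ + q₂)).det * (1 + B * q₂).det * (1 + B * q₂').det
        ≤ (1 + B * (q₁ + q₂)).det * (1 + A * q₂).det * (1 + A * q₂').det := by
  obtain ⟨L₁, rfl⟩ := exists_eq_mul_conjTranspose h₁
  obtain ⟨L₂, rfl⟩ := exists_eq_mul_conjTranspose h₂
  set R : Matrix (Fin nt) (Fin nt ⊕ Fin nt) ℂ := fromCols L₁ L₂ with hR
  have hRR : L₁ * L₁ᴴ + L₂ * L₂ᴴ = R * Rᴴ := by
    rw [hR, conjTranspose_fromCols_eq_fromRows_conjTranspose, fromCols_mul_fromRows]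
  set Z₀ : Matrix (Fin nt ⊕ Fin nt) (Fin nt ⊕ Fin nt) ℂ := fromBlocks 0 0 0 1 with hZ₀
  have hRZ : L₂ * L₂ᴴ = R * Z₀ * Rᴴ := by
    rw [hR, hZ₀, conjTranspose_fromCols_eq_fromRows_conjTranspose, fromCols_mul_fromBlocks,
      fromCols_mul_fromRows]
    simp
  have hZh : Z₀ᴴ = Z₀ := by simp [hZ₀, fromBlocks_conjTranspose]
  have hZZ : Z₀ * Z₀ = Z₀ := by simp [hZ₀, fromBlocks_multiply]
  have hA' := hA.conjTranspose_mul_mul_same R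
  have hB' := hB.conjTranspose_mul_mul_same R
  obtain ⟨C, d, hC, hCA, hCB, hd⟩ := exists_pencil (posDef_one_add hA') (posDef_one_add hB')
  have hU := pencil_upper hA' hB' hC hCA hCB hZh hZZ
  obtain ⟨Z, hZ, hZ1, hatt⟩ := pencil_attain hC hCA hCB
  have hdet : ∀ (M : Matrix (Fin nt) (Fin nt) ℂ) (W : Matrix (Fin nt ⊕ Fin nt) (Fin nt ⊕ Fin nt) ℂ),
      (1 + M * (R * W * Rᴴ)).det = (1 + W * (Rᴴ * M * R)).det := by
    intro M W
    rw [show M * (R * W * Rᴴ) = (M * R) * (W * Rᴴ) by simp only [Matrix.mul_assoc],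
      det_one_add_mul_comm]
    simp only [Matrix.mul_assoc]
  have hdet1 : ∀ (M : Matrix (Fin nt) (Fin nt) ℂ),
      (1 + M * (R * Rᴴ)).det = (1 + Rᴴ * M * R).det := by
    intro M
    have := hdet M 1
    rwa [Matrix.mul_one, Matrix.one_mul] at this
  -- the determinants of `Rᴴ M R` for the two channels differ by the factor `∏ d`
  have hfull : (1 + Rᴴ * B * R).det = ((∏ i, d i : ℝ) : ℂ) * (1 + Rᴴ * A * R).det := by
    have e1 := congrArg det hCA
    have e2 := congrArg det hCB
    rw [det_mul, det_mul, det_one] at e1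
    rw [det_mul, det_mul, det_diagonal] at e2
    push_cast
    rw [← e2]
    linear_combination (-(1 + Rᴴ * B * R).det) * e1
  have hM : (0 : ℂ) < ((∏ i, (max 1 (d i) : ℝ) : ℝ) : ℂ) := by
    rw [Complex.zero_lt_real]
    exact Finset.prod_pos fun i _ => lt_max_of_lt_left one_pos
  refine ⟨R * (1 - Z) * Rᴴ, R * Z * Rᴴ, hZ1.mul_mul_conjTranspose_same R,
    hZ.mul_mul_conjTranspose_same R, ?_, ?_⟩
  · rw [hRR, ← Matrix.add_mul, ← Matrix.mul_add]; simp
  · have pA := det_one_add_mul_pos hA (h₁.add h₂)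
    have pA' := det_one_add_mul_pos hA (hZ.mul_mul_conjTranspose_same R)
    rw [hRR, hdet1] at pA
    rw [hdet] at pA'
    rw [hRR, hRZ, hdet1, hdet1, hdet, hdet, hdet, hdet, hfull]
    have hD : (0 : ℂ) ≤ ((∏ i, d i : ℝ) : ℂ) := by
      rw [Complex.zero_le_real]
      exact Finset.prod_nonneg fun i _ => (hd i).le
    generalize ((∏ i, d i : ℝ) : ℂ) = D at *
    generalize ((∏ i, (max 1 (d i) : ℝ) : ℝ) : ℂ) = M at *
    generalize (1 + Rᴴ * A * R).det = a at *
    generalize (1 + Z * (Rᴴ * A * R)).det = a₃ at *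
    generalize (1 + Z * (Rᴴ * B * R)).det = b₃ at *
    generalize (1 + Z₀ * (Rᴴ * A * R)).det = a₂ at *
    generalize (1 + Z₀ * (Rᴴ * B * R)).det = b₂ at *
    refine le_of_mul_le_mul_left ?_ hM
    calc M * (a * b₂ * b₃) = (D * a * a₃) * b₂ := by linear_combination (a * b₂) * hatt
      _ ≤ (D * a * a₃) * (M * a₂) :=
          mul_le_mul_of_nonneg_left hU (mul_nonneg (mul_nonneg hD pA.le) pA'.le)
      _ = M * (D * a * a₂ * a₃) := by ring

/-- With `S` encoded after both of them, the user of `Ha` followed by that of `Hb` achieves no more than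
the user of `Hb` followed by that of `Ha`, for the same total covariance. -/
lemma exists_swap_logdet {ma mb nt : ℕ} (Ha : Matrix (Fin ma) (Fin nt) ℂ)
    (Hb : Matrix (Fin mb) (Fin nt) ℂ) {S q₁ q₂ : Matrix (Fin nt) (Fin nt) ℂ}
    (hS : S.PosSemidef) (h₁ : q₁.PosSemidef) (h₂ : q₂.PosSemidef) :
    ∃ q₁' q₂' : Matrix (Fin nt) (Fin nt) ℂ, q₁'.PosSemidef ∧ q₂'.PosSemidef ∧
      q₁' + q₂' = q₁ + q₂ ∧
      logdetI (Ha * (S + (q₁ + q₂)) * Haᴴ) - logdetI (Ha * (S + q₂) * Haᴴ)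
          + (logdetI (Hb * (S + q₂) * Hbᴴ) - logdetI (Hb * S * Hbᴴ))
        ≤ logdetI (Hb * (S + (q₁ + q₂)) * Hbᴴ) - logdetI (Hb * (S + q₂') * Hbᴴ)
          + (logdetI (Ha * (S + q₂') * Haᴴ) - logdetI (Ha * S * Haᴴ)) := by
  have hA := logdetGrad_posSemidef Ha hS
  have hB := logdetGrad_posSemidef Hb hS
  obtain ⟨q₁', q₂', h₁', h₂', hsum, hle⟩ := exists_swap_det hA hB h₁ h₂
  refine ⟨q₁', q₂', h₁', h₂', hsum, ?_⟩
  rw [logdetI_add Ha hS (h₁.add h₂), logdetI_add Ha hS h₂, logdetI_add Hb hS h₂,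
    logdetI_add Hb hS (h₁.add h₂), logdetI_add Ha hS h₂', logdetI_add Hb hS h₂']
  have key : ∀ {z : ℂ}, 0 < z → ∃ r : ℝ, 0 < r ∧ z = r := by
    intro z hz
    have := Complex.pos_iff.1 hz
    exact ⟨z.re, this.1, Complex.ext rfl this.2.symm⟩
  obtain ⟨a, ha, ea⟩ := key (det_one_add_mul_pos hA (h₁.add h₂))
  obtain ⟨b, hb, eb⟩ := key (det_one_add_mul_pos hB (h₁.add h₂))
  obtain ⟨a₂, ha₂, ea₂⟩ := key (det_one_add_mul_pos hA h₂)
  obtain ⟨b₂, hb₂, eb₂⟩ := key (det_one_add_mul_pos hB h₂)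
  obtain ⟨a₃, ha₃, ea₃⟩ := key (det_one_add_mul_pos hA h₂')
  obtain ⟨b₃, hb₃, eb₃⟩ := key (det_one_add_mul_pos hB h₂')
  rw [ea, eb, ea₂, eb₂, ea₃, eb₃] at hle ⊢
  simp only [Complex.ofReal_re]
  have hle' : a * b₂ * b₃ ≤ b * a₂ * a₃ := by exact_mod_cast hle
  have := Real.log_le_log (by positivity) hle'
  rw [Real.log_mul (by positivity) (by positivity), Real.log_mul (by positivity) (by positivity),
    Real.log_mul (by positivity) (by positivity), Real.log_mul (by positivity) (by positivity)]
    at this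
  linarith

end Swap

/-! ### The secrecy rate and the gradient inequality -/

section Degraded

variable {m n p : Type*} [Fintype m] [Fintype n] [Fintype p]
  [DecidableEq m] [DecidableEq n] [DecidableEq p]

/-- For positive definite `X` this is `(X⁻¹ + L Lᴴ)⁻¹`. -/
noncomputable def gradUp (L X : Matrix n n ℂ) : Matrix n n ℂ :=
  X - X * L * (1 + Lᴴ * X * L)⁻¹ * Lᴴ * X

lemma logdetGrad_add (H : Matrix m n ℂ) {S : Matrix n n ℂ} (hS : S.PosSemidef)
    (L : Matrix n n ℂ) : logdetGrad H (S + L * Lᴴ) = gradUp L (logdetGrad H S) := by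
  have hA := (posDef_one_add_conj H hS)
  have hG := posDef_one_add ((logdetGrad_posSemidef H hS).conjTranspose_mul_mul_same L)
  have hW := add_mul_mul_inv_eq_sub (A := 1 + H * S * Hᴴ) (U := H * L)
    (C := (1 : Matrix n n ℂ)) (V := Lᴴ * Hᴴ) hA.isUnit isUnit_one (by
      have := hG.isUnit
      rw [logdetGrad] at this
      rw [inv_one]
      simpa only [Matrix.mul_assoc] using this)
  have e : 1 + H * (S + L * Lᴴ) * Hᴴ = 1 + H * S * Hᴴ + H * L * (1 : Matrix n n ℂ) * (Lᴴ * Hᴴ) := by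
    rw [Matrix.mul_one, Matrix.mul_add, Matrix.add_mul]; simp only [Matrix.mul_assoc, add_assoc]
  rw [gradUp, logdetGrad, e, hW, inv_one]
  simp only [logdetGrad, Matrix.mul_assoc, Matrix.mul_sub, Matrix.sub_mul]

lemma gradUp_add {L X Φ : Matrix n n ℂ} (h : Φ * L = 0) (h' : Lᴴ * Φ = 0) :
    gradUp L (X + Φ) = gradUp L X + Φ := by
  simp only [gradUp, Matrix.mul_add, Matrix.add_mul, h, h', Matrix.mul_assoc, Matrix.mul_zero,
    add_zero]
  abel

/-- Completion of squares. Hence `X` dominates `(1 + L Z)ᴴ (gradUp L X) (1 + L Z) - Zᴴ Z` for all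
`Z`, with equality for `Z = Lᴴ X`. -/
lemma gradUp_identity {L X : Matrix n n ℂ} (hX : X.PosSemidef) (Z : Matrix n n ℂ) :
    X - (1 + L * Z)ᴴ * gradUp L X * (1 + L * Z) + Zᴴ * Z
      = (Z - Lᴴ * X)ᴴ * (1 + Lᴴ * X * L)⁻¹ * (Z - Lᴴ * X) := by
  have hG := posDef_one_add (hX.conjTranspose_mul_mul_same L)
  have hu := (isUnit_iff_isUnit_det _).1 hG.isUnit
  have hXh : Xᴴ = X := hX.1
  set J := (1 + Lᴴ * X * L)⁻¹ with hJ
  have h1 : J * (Lᴴ * X * L) = 1 - J := by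
    have := nonsing_inv_mul _ hu
    rw [← hJ, mul_add, mul_one] at this
    rw [← this]; abel
  have h2 : (Lᴴ * X * L) * J = 1 - J := by
    have := mul_nonsing_inv _ hu
    rw [← hJ, add_mul, one_mul] at this
    rw [← this]; abel
  have a1 : Lᴴ * gradUp L X = J * (Lᴴ * X) := by
    calc Lᴴ * gradUp L X = Lᴴ * X - ((Lᴴ * X * L) * J) * (Lᴴ * X) := by
          simp only [gradUp, mul_sub, mul_assoc, hJ]
      _ = _ := by rw [h2]; noncomm_ring
  have a2 : gradUp L X * L = X * L * J := by
    calc gradUp L X * L = X * L - X * L * (J * (Lᴴ * X * L)) := by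
          simp only [gradUp, sub_mul, mul_assoc, hJ]
      _ = _ := by rw [h1]; noncomm_ring
  have a3 : Lᴴ * gradUp L X * L = 1 - J := by
    rw [a1, ← h1]; simp only [mul_assoc]
  have e1 : (1 + L * Z)ᴴ * gradUp L X * (1 + L * Z)
      = gradUp L X + Zᴴ * (Lᴴ * gradUp L X) + (gradUp L X * L) * Z
        + Zᴴ * (Lᴴ * gradUp L X * L) * Z := by
    rw [conjTranspose_add, conjTranspose_one, conjTranspose_mul]; noncomm_ring
  rw [e1, a3, a1, a2, gradUp, ← hJ, conjTranspose_sub, conjTranspose_mul, conjTranspose_conjTranspose,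
    hXh]
  noncomm_ring

/-- `gradUp L` reflects the Loewner order, as is clear from `gradUp L X = (X⁻¹ + L Lᴴ)⁻¹` for invertible
`X`. The variational form `gradUp_identity` at `Z = Lᴴ N` avoids inverting `X`. -/
lemma posSemidef_sub_of_gradUp {L T N : Matrix n n ℂ} (hT : T.PosSemidef) (hN : N.PosSemidef)
    (h : (gradUp L T - gradUp L N).PosSemidef) : (T - N).PosSemidef := by
  have i1 := gradUp_identity (L := L) hT (Lᴴ * N)
  have i2 := gradUp_identity (L := L) hN (Lᴴ * N)
  rw [sub_self, Matrix.mul_zero] at i2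
  have hpos : ((Lᴴ * N - Lᴴ * T)ᴴ * (1 + Lᴴ * T * L)⁻¹ * (Lᴴ * N - Lᴴ * T)).PosSemidef :=
    (posDef_one_add (hT.conjTranspose_mul_mul_same L)).inv.posSemidef.conjTranspose_mul_mul_same _
  have hW := h.conjTranspose_mul_mul_same (1 + L * (Lᴴ * N))
  have e : T - N = (Lᴴ * N - Lᴴ * T)ᴴ * (1 + Lᴴ * T * L)⁻¹ * (Lᴴ * N - Lᴴ * T)
      + (1 + L * (Lᴴ * N))ᴴ * (gradUp L T - gradUp L N) * (1 + L * (Lᴴ * N)) := by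
    rw [← i1, mul_sub, sub_mul]
    calc T - N = (T - N) + (N - (1 + L * (Lᴴ * N))ᴴ * gradUp L N * (1 + L * (Lᴴ * N))
            + (Lᴴ * N)ᴴ * (Lᴴ * N)) := by rw [i2, add_zero]
      _ = _ := by abel
  rw [e]
  exact hpos.add hW

end Degraded

section Rates

/-- If `∇f + Φ ≥ ∇g` at `S + L Lᴴ` and the slack `Φ` vanishes on the range of `L`, then `∇f + Φ ≥ ∇g`
also at `S`, and passing from `S` to `S + L Lᴴ` increases `f` by at least as much as `g`. Here `f` and
`g` are the log-determinants of the channels `H` and `G`. -/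
lemma rate_step {mh mg nt : ℕ} (H : Matrix (Fin mh) (Fin nt) ℂ) (G : Matrix (Fin mg) (Fin nt) ℂ)
    {S L Φ : Matrix (Fin nt) (Fin nt) ℂ} (hS : S.PosSemidef) (hΦ : Φ.PosSemidef) (hΦL : Φ * L = 0)
    (h : (logdetGrad H (S + L * Lᴴ) + Φ - logdetGrad G (S + L * Lᴴ)).PosSemidef) :
    (logdetGrad H S + Φ - logdetGrad G S).PosSemidef ∧
    0 ≤ logdetI (H * (S + L * Lᴴ) * Hᴴ) - logdetI (H * S * Hᴴ)
      - logdetI (G * (S + L * Lᴴ) * Gᴴ) + logdetI (G * S * Gᴴ) := by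
  have hM := logdetGrad_posSemidef H hS
  have hN := logdetGrad_posSemidef G hS
  have hΦL' : Lᴴ * Φ = 0 := by
    have := congrArg conjTranspose hΦL
    rwa [conjTranspose_mul, hΦ.1, conjTranspose_zero] at this
  rw [logdetGrad_add H hS, logdetGrad_add G hS, ← gradUp_add hΦL hΦL'] at h
  have hTN := posSemidef_sub_of_gradUp (hM.add hΦ) hN h
  refine ⟨hTN, ?_⟩
  have hL : (L * Lᴴ).PosSemidef := posSemidef_self_mul_conjTranspose L
  rw [logdetI_add H hS hL, logdetI_add G hS hL]
  have hdet : ∀ X : Matrix (Fin nt) (Fin nt) ℂ, (1 + X * (L * Lᴴ)).det = (1 + Lᴴ * X * L).det := by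
    intro X
    rw [← mul_assoc, det_one_add_mul_comm, mul_assoc]
  have hle : (1 + logdetGrad G S * (L * Lᴴ)).det ≤ (1 + logdetGrad H S * (L * Lᴴ)).det := by
    rw [hdet, hdet]
    apply det_le_det_of_sub (posDef_one_add (hN.conjTranspose_mul_mul_same L))
    have := hTN.conjTranspose_mul_mul_same L
    rw [mul_sub, mul_add, hΦL', add_zero, sub_mul] at this
    simpa using this
  have h1 := Complex.pos_iff.1 (det_one_add_mul_pos hN hL)
  have := Real.log_le_log h1.1 (Complex.le_def.1 hle).1
  linarith

lemma hasDerivAt_logdetI {mh nt : ℕ} (H : Matrix (Fin mh) (Fin nt) ℂ)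
    {S : Matrix (Fin nt) (Fin nt) ℂ} (hS : S.PosSemidef) (E : Matrix (Fin nt) (Fin nt) ℂ) :
    HasDerivAt (fun t : ℝ => logdetI (H * (S + (t : ℂ) • E) * Hᴴ))
      (logdetGrad H S * E).trace.re 0 := by
  set c := (1 + H * S * Hᴴ).det with hc
  have hcpos := Complex.pos_iff.1 (posDef_one_add_conj H hS).det_pos
  rw [← hc] at hcpos
  set M := logdetGrad H S * E with hM
  have hfun : ∀ z : ℂ, (1 + H * (S + z • E) * Hᴴ).det = c * (1 + z • M).det := by
    intro z
    rw [det_add_eq H hS, mul_smul_comm]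
  have hd : HasDerivAt (fun z : ℂ => (1 + H * (S + z • E) * Hᴴ).det) (c * M.trace) ((0 : ℝ) : ℂ) := by
    set q := (det (1 + (Polynomial.X : Polynomial ℂ) • M.map Polynomial.C)).divX.divX with hq
    have hfun' : (fun z : ℂ => (1 + H * (S + z • E) * Hᴴ).det)
        = fun z => c * (1 + M.trace * z + q.eval z * z ^ 2) := by
      funext z
      rw [hfun, det_one_add_smul]
    rw [hfun']
    have h2 := (q.hasDerivAt ((0 : ℝ) : ℂ)).mul (hasDerivAt_pow 2 ((0 : ℝ) : ℂ))
    have h3 := ((((hasDerivAt_id ((0 : ℝ) : ℂ)).const_mul M.trace).const_add 1).add h2).const_mul c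
    refine h3.congr_deriv ?_
    simp
  have hr := hd.real_of_complex
  have hl := hr.log (by simp [← hc, hcpos.1.ne'])
  refine hl.congr_deriv ?_
  simp only [Complex.ofReal_zero, zero_smul, add_zero, ← hc, Complex.mul_re, ← hcpos.2, zero_mul,
    sub_zero]
  field_simp [hcpos.1.ne']

end Rates

/-! ### Rates by encoding position -/

section Chain

variable {K nt ne : ℕ} {n : Fin K → ℕ}

/-- The secrecy rate of user `u` when the covariances encoded from `u` on sum to `S` and those
encoded after `u` sum to `S'`. -/
noncomputable def rateAt (H : ∀ k : Fin K, Matrix (Fin (n k)) (Fin nt) ℂ)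
    (G : Matrix (Fin ne) (Fin nt) ℂ) (u : Fin K) (S S' : Matrix (Fin nt) (Fin nt) ℂ) : ℝ :=
  logdetI (H u * S * (H u)ᴴ) - logdetI (H u * S' * (H u)ᴴ)
    - logdetI (G * S * Gᴴ) + logdetI (G * S' * Gᴴ)

/-- The secrecy rate at position `k`, in terms of the covariances `q` listed by position. -/
noncomputable def posRate (H : ∀ k : Fin K, Matrix (Fin (n k)) (Fin nt) ℂ)
    (G : Matrix (Fin ne) (Fin nt) ℂ) (π : Equiv.Perm (Fin K))
    (q : Fin K → Matrix (Fin nt) (Fin nt) ℂ) (k : Fin K) : ℝ :=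
  rateAt H G (π k) (∑ j ∈ Finset.univ.filter (fun j => k ≤ j), q j)
    (∑ j ∈ Finset.univ.filter (fun j => k < j), q j)

lemma secrecyRate_eq_posRate (H : ∀ k : Fin K, Matrix (Fin (n k)) (Fin nt) ℂ)
    (G : Matrix (Fin ne) (Fin nt) ℂ) (π : Equiv.Perm (Fin K))
    (Q : Fin K → Matrix (Fin nt) (Fin nt) ℂ) (k : Fin K) :
    secrecyRate H G π Q k = posRate H G π (fun j => Q (π j)) k := rfl

lemma sum_split_pair {ι M : Type*} [DecidableEq ι] [AddCommMonoid M] (f : ι → M) {a b : ι}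
    (hab : a ≠ b) {T : Finset ι} (ha : a ∈ T) (hb : b ∈ T) :
    ∑ j ∈ T, f j = f a + f b + ∑ j ∈ (T.erase a).erase b, f j := by
  rw [add_assoc, Finset.add_sum_erase _ _ (Finset.mem_erase.2 ⟨hab.symm, hb⟩),
    Finset.add_sum_erase _ _ ha]

lemma sum_congr_pair {ι M : Type*} [DecidableEq ι] [AddCommMonoid M] {f g : ι → M} {a b : ι}
    (hab : a ≠ b) (hfg : ∀ j, j ≠ a → j ≠ b → f j = g j) (hs : f a + f b = g a + g b)
    {T : Finset ι} (hT : a ∈ T ↔ b ∈ T) :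
    ∑ j ∈ T, f j = ∑ j ∈ T, g j := by
  by_cases ha : a ∈ T
  · rw [sum_split_pair f hab ha (hT.1 ha), sum_split_pair g hab ha (hT.1 ha), hs]
    congr 1
    refine Finset.sum_congr rfl fun j hj => hfg j ?_ ?_
    · rintro rfl; simp at hj
    · rintro rfl; simp at hj
  · refine Finset.sum_congr rfl fun j hj => hfg j ?_ ?_
    · rintro rfl; exact ha hj
    · rintro rfl; exact ha (hT.2 hj)

end Chain

section AdjacentSwap

variable {N nt ne : ℕ} {n : Fin (N + 1) → ℕ}

/-- Exchanging the users at two adjacent positions does not lower the best sum rate, rates being allowed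
to be negative. -/
lemma exists_adjacent_swap_s1 (H : ∀ k : Fin (N + 1), Matrix (Fin (n k)) (Fin nt) ℂ)
    (G : Matrix (Fin ne) (Fin nt) ℂ) (π : Equiv.Perm (Fin (N + 1))) (i : Fin N)
    {q : Fin (N + 1) → Matrix (Fin nt) (Fin nt) ℂ} (hq : ∀ k, (q k).PosSemidef) :
    ∃ q' : Fin (N + 1) → Matrix (Fin nt) (Fin nt) ℂ, (∀ k, (q' k).PosSemidef) ∧
      ∑ k, q' k = ∑ k, q k ∧
      ∑ k, posRate H G π q k
        ≤ ∑ k, posRate H G (π * Equiv.swap i.castSucc i.succ) q' k := by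
  set a := i.castSucc with ha
  set b := i.succ with hb
  have hlt : a < b := Fin.castSucc_lt_succ
  have hab : a ≠ b := hlt.ne
  have hcov : ∀ j : Fin (N + 1), a < j ↔ b ≤ j := fun j => Fin.castSucc_lt_iff_succ_le
  set S := ∑ j ∈ Finset.univ.filter (fun j => b < j), q j with hS
  have hSp : S.PosSemidef := posSemidef_sum _ fun j _ => hq j
  obtain ⟨q₁, q₂, h₁, h₂, hsum, hle⟩ :=
    exists_swap_logdet (H (π a)) (H (π b)) hSp (hq a) (hq b)
  set q' : Fin (N + 1) → Matrix (Fin nt) (Fin nt) ℂ :=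
    Function.update (Function.update q a q₁) b q₂ with hq'
  have q'a : q' a = q₁ := by simp [hq', hab]
  have q'b : q' b = q₂ := by simp [hq']
  have q'o : ∀ j, j ≠ a → j ≠ b → q' j = q j := fun j h1 h2 => by simp [hq', h1, h2]
  have hs : q' a + q' b = q a + q b := by rw [q'a, q'b, hsum]
  have hpair : ∀ {T : Finset (Fin (N + 1))}, (a ∈ T ↔ b ∈ T) → ∑ j ∈ T, q' j = ∑ j ∈ T, q j :=
    fun hT => sum_congr_pair hab q'o hs hT
  have fb : ∀ r : Fin (N + 1) → Matrix (Fin nt) (Fin nt) ℂ,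
      ∑ j ∈ Finset.univ.filter (fun j => b ≤ j), r j
        = ∑ j ∈ Finset.univ.filter (fun j => b < j), r j + r b := by
    intro r
    have : Finset.univ.filter (fun j => b ≤ j) = insert b (Finset.univ.filter (fun j => b < j)) := by
      ext j; simp [le_iff_eq_or_lt, eq_comm]
    rw [this, Finset.sum_insert (by simp), add_comm]
  have fa : ∀ r : Fin (N + 1) → Matrix (Fin nt) (Fin nt) ℂ,
      ∑ j ∈ Finset.univ.filter (fun j => a < j), r j
        = ∑ j ∈ Finset.univ.filter (fun j => b ≤ j), r j := by
    intro r; simp only [hcov]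
  have fa' : ∀ r : Fin (N + 1) → Matrix (Fin nt) (Fin nt) ℂ,
      ∑ j ∈ Finset.univ.filter (fun j => a ≤ j), r j
        = ∑ j ∈ Finset.univ.filter (fun j => b < j), r j + (r a + r b) := by
    intro r
    have : Finset.univ.filter (fun j => a ≤ j) = insert a (Finset.univ.filter (fun j => a < j)) := by
      ext j; simp [le_iff_eq_or_lt, eq_comm]
    rw [this, Finset.sum_insert (by simp), fa, fb]; abel
  have hS' : ∑ j ∈ Finset.univ.filter (fun j => b < j), q' j = S :=
    hpair (by simp [hlt.le])
  refine ⟨q', ?_, hpair (by simp), ?_⟩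
  · intro k
    by_cases hkb : k = b
    · rw [hkb, q'b]; exact h₂
    by_cases hka : k = a
    · rw [hka, q'a]; exact h₁
    rw [q'o k hka hkb]; exact hq k
  · rw [sum_split_pair _ hab (Finset.mem_univ a) (Finset.mem_univ b),
      sum_split_pair (posRate H G (π * Equiv.swap a b) q') hab (Finset.mem_univ a)
        (Finset.mem_univ b)]
    apply add_le_add
    · simp only [posRate, Equiv.Perm.mul_apply, Equiv.swap_apply_left, Equiv.swap_apply_right,
        fa, fb, fa', hS', ← hS, q'a, q'b, hsum]
      simp only [rateAt]
      linarith
    · refine (Finset.sum_congr rfl fun k hk => ?_).le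
      have hka : k ≠ a := by rintro rfl; simp at hk
      have hkb : k ≠ b := by rintro rfl; simp at hk
      have h1 : a < k ↔ b < k := by
        rw [hcov]; exact ⟨fun h => lt_of_le_of_ne h hkb.symm, le_of_lt⟩
      have h2 : k < a ↔ k < b := by
        constructor
        · exact fun h => h.trans hlt
        · intro h
          by_contra hc
          exact absurd (h1.1 (lt_of_le_of_ne (not_lt.1 hc) hka.symm)) h.asymm
      have h3 : k ≤ a ↔ k ≤ b := by
        rw [le_iff_lt_or_eq, le_iff_lt_or_eq, h2]; simp [hka, hkb]
      simp only [posRate, Equiv.Perm.mul_apply, Equiv.swap_apply_of_ne_of_ne hka hkb]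
      rw [hpair (by simpa using h3), hpair (by simpa using h2)]

end AdjacentSwap

/-! ### First-order conditions -/

section FirstOrder

variable {K nt ne : ℕ} {n : Fin K → ℕ}

lemma deriv_nonpos_of_max {φ : ℝ → ℝ} {d : ℝ} (hd : HasDerivAt φ d 0)
    (hmax : ∀ t, 0 ≤ t → t ≤ 1 → φ t ≤ φ 0) : d ≤ 0 := by
  refine le_of_tendsto hd.tendsto_slope_zero_right ?_
  filter_upwards [Ioo_mem_nhdsGT (zero_lt_one (α := ℝ))] with t ht
  rw [zero_add, smul_eq_mul]
  exact mul_nonpos_of_nonneg_of_nonpos (inv_nonneg.2 ht.1.le)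
    (sub_nonpos.2 (hmax t ht.1.le ht.2.le))

/-- The gradient of the sum rate with respect to the covariance at position `j`, for the trace
pairing: user `k` sees it in the sum from `k` on if `k ≤ j` and in the sum after `k` if `k < j`. -/
noncomputable def sumRateGrad (H : ∀ k : Fin K, Matrix (Fin (n k)) (Fin nt) ℂ)
    (G : Matrix (Fin ne) (Fin nt) ℂ) (π : Equiv.Perm (Fin K))
    (q : Fin K → Matrix (Fin nt) (Fin nt) ℂ) (j : Fin K) : Matrix (Fin nt) (Fin nt) ℂ :=
  ∑ k ∈ Finset.univ.filter (fun k => k ≤ j),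
      (logdetGrad (H (π k)) (∑ i ∈ Finset.univ.filter (fun i => k ≤ i), q i)
        - logdetGrad G (∑ i ∈ Finset.univ.filter (fun i => k ≤ i), q i))
    - ∑ k ∈ Finset.univ.filter (fun k => k < j),
      (logdetGrad (H (π k)) (∑ i ∈ Finset.univ.filter (fun i => k < i), q i)
        - logdetGrad G (∑ i ∈ Finset.univ.filter (fun i => k < i), q i))

lemma sumRateGrad_isHermitian (H : ∀ k : Fin K, Matrix (Fin (n k)) (Fin nt) ℂ)
    (G : Matrix (Fin ne) (Fin nt) ℂ) (π : Equiv.Perm (Fin K))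
    {q : Fin K → Matrix (Fin nt) (Fin nt) ℂ} (hq : ∀ k, (q k).PosSemidef) (j : Fin K) :
    (sumRateGrad H G π q j).IsHermitian := by
  have hs : ∀ T : Finset (Fin K), (∑ i ∈ T, q i).PosSemidef := fun T =>
    posSemidef_sum _ fun i _ => hq i
  unfold sumRateGrad IsHermitian
  simp only [conjTranspose_sub, conjTranspose_sum, (logdetGrad_posSemidef _ (hs _)).1.eq]

lemma hasDerivAt_sum_posRate (H : ∀ k : Fin K, Matrix (Fin (n k)) (Fin nt) ℂ)
    (G : Matrix (Fin ne) (Fin nt) ℂ) (π : Equiv.Perm (Fin K))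
    {q : Fin K → Matrix (Fin nt) (Fin nt) ℂ} (hq : ∀ k, (q k).PosSemidef)
    (E : Fin K → Matrix (Fin nt) (Fin nt) ℂ) :
    HasDerivAt (fun t : ℝ => ∑ k, posRate H G π (fun j => q j + (t : ℂ) • E j) k)
      (∑ j, (sumRateGrad H G π q j * E j).trace.re) 0 := by
  have hs : ∀ T : Finset (Fin K), (∑ i ∈ T, q i).PosSemidef := fun T =>
    posSemidef_sum _ fun i _ => hq i
  have hsum : ∀ (T : Finset (Fin K)) (t : ℝ), ∑ j ∈ T, (q j + (t : ℂ) • E j)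
      = ∑ j ∈ T, q j + (t : ℂ) • ∑ j ∈ T, E j := by
    intro T t; rw [Finset.sum_add_distrib, Finset.smul_sum]
  have h := HasDerivAt.fun_sum (u := Finset.univ) fun (k : Fin K) _ =>
    ((((hasDerivAt_logdetI (H (π k)) (hs (Finset.univ.filter (fun j => k ≤ j)))
      (∑ j ∈ Finset.univ.filter (fun j => k ≤ j), E j)).sub
    (hasDerivAt_logdetI (H (π k)) (hs (Finset.univ.filter (fun j => k < j)))
      (∑ j ∈ Finset.univ.filter (fun j => k < j), E j))).sub
    (hasDerivAt_logdetI G (hs (Finset.univ.filter (fun j => k ≤ j)))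
      (∑ j ∈ Finset.univ.filter (fun j => k ≤ j), E j))).add
    (hasDerivAt_logdetI G (hs (Finset.univ.filter (fun j => k < j)))
      (∑ j ∈ Finset.univ.filter (fun j => k < j), E j)))
  simp only [posRate, rateAt, hsum]
  refine h.congr_deriv ?_
  -- exchange the order of summation over positions `k ≤ j`
  simp only [sumRateGrad, Matrix.sub_mul, Matrix.sum_mul, Matrix.mul_sum, trace_sub, trace_sum,
    Complex.sub_re, Complex.re_sum, Finset.sum_add_distrib, Finset.sum_sub_distrib]
  have hex1 : ∀ f : Fin K → Fin K → ℝ,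
      ∑ k, ∑ j ∈ Finset.univ.filter (fun j => k ≤ j), f k j
        = ∑ j, ∑ k ∈ Finset.univ.filter (fun k => k ≤ j), f k j := by
    intro f; exact Finset.sum_comm' (by simp)
  have hex2 : ∀ f : Fin K → Fin K → ℝ,
      ∑ k, ∑ j ∈ Finset.univ.filter (fun j => k < j), f k j
        = ∑ j, ∑ k ∈ Finset.univ.filter (fun k => k < j), f k j := by
    intro f; exact Finset.sum_comm' (by simp)
  simp only [hex1, hex2]
  ring

/-- Karush-Kuhn-Tucker conditions for maximizing a linear functional over tuples of positive
semidefinite matrices of total trace at most `P`. -/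
lemma exists_multiplier {P : ℝ} (hP : 0 < P) {D q : Fin K → Matrix (Fin nt) (Fin nt) ℂ}
    (hD : ∀ j, (D j).IsHermitian) (hq : ∀ j, (q j).PosSemidef) (hqP : ∑ j, (q j).trace.re ≤ P)
    (hmax : ∀ Z : Fin K → Matrix (Fin nt) (Fin nt) ℂ, (∀ j, (Z j).PosSemidef) →
      ∑ j, (Z j).trace.re ≤ P → ∑ j, (D j * Z j).trace.re ≤ ∑ j, (D j * q j).trace.re) :
    ∃ c : ℝ, 0 ≤ c ∧ (∀ j, ((c : ℂ) • 1 - D j).PosSemidef) ∧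
      ∀ j L, q j = L * Lᴴ → ((c : ℂ) • 1 - D j) * L = 0 := by
  set v := ∑ j, (D j * q j).trace.re with hv
  have hv0 : 0 ≤ v := by simpa [hP.le] using hmax 0 (fun _ => PosSemidef.zero)
  have hΦ : ∀ j, (((v / P : ℝ) : ℂ) • (1 : Matrix (Fin nt) (Fin nt) ℂ) - D j).PosSemidef := by
    intro j
    have hh : (((v / P : ℝ) : ℂ) • (1 : Matrix (Fin nt) (Fin nt) ℂ) - D j).IsHermitian := by
      unfold IsHermitian
      rw [conjTranspose_sub, conjTranspose_smul, conjTranspose_one, (hD j).eq]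
      simp
    refine PosSemidef.of_dotProduct_mulVec_nonneg hh fun x => ?_
    rw [Complex.nonneg_iff]
    refine ⟨?_, (hh.im_star_dotProduct_mulVec_self x).symm⟩
    set W := vecMulVec x (star x) with hW
    have hWp : W.PosSemidef := posSemidef_vecMulVec_self_star x
    have htr : ∀ A : Matrix (Fin nt) (Fin nt) ℂ, (A * W).trace = star x ⬝ᵥ (A *ᵥ x) := by
      intro A
      rw [hW, mul_vecMulVec, trace_vecMulVec, dotProduct_comm]
    have hT0 : 0 ≤ W.trace.re := (Complex.nonneg_iff.1 hWp.trace_nonneg).1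
    rw [← htr, Matrix.sub_mul, trace_sub, Complex.sub_re, Matrix.smul_mul, Matrix.one_mul,
      trace_smul, smul_eq_mul, Complex.re_ofReal_mul, sub_nonneg]
    rcases hT0.eq_or_lt with h0 | hpos
    · have : W = 0 := hWp.trace_eq_zero_iff.1
        (Complex.ext h0.symm (Complex.nonneg_iff.1 hWp.trace_nonneg).2.symm)
      simp [this]
    · have hc : (0 : ℂ) ≤ ((P / W.trace.re : ℝ) : ℂ) := by
        rw [Complex.zero_le_real]; positivity
      have := hmax (Pi.single j (((P / W.trace.re : ℝ) : ℂ) • W)) (by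
          intro i
          rcases eq_or_ne i j with rfl | hij
          · rw [Pi.single_eq_same]; exact hWp.smul hc
          · rw [Pi.single_eq_of_ne hij]; exact PosSemidef.zero) (by
          rw [Finset.sum_eq_single j (fun i _ hij => by simp [Pi.single_eq_of_ne hij]) (by simp),
            Pi.single_eq_same, trace_smul, smul_eq_mul, Complex.re_ofReal_mul,
            div_mul_cancel₀ _ hpos.ne'])
      rw [Finset.sum_eq_single j (fun i _ hij => by simp [Pi.single_eq_of_ne hij]) (by simp),
            Pi.single_eq_same, Matrix.mul_smul, trace_smul, smul_eq_mul,
            Complex.re_ofReal_mul] at this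
      have h2 := mul_le_mul_of_nonneg_left this (div_pos hpos hP).le
      calc (D j * W).trace.re = W.trace.re / P * (P / W.trace.re * (D j * W).trace.re) := by
            field_simp
        _ ≤ W.trace.re / P * v := h2
        _ = _ := by ring
  refine ⟨v / P, div_nonneg hv0 hP.le, hΦ, ?_⟩
  set Φ : Fin K → Matrix (Fin nt) (Fin nt) ℂ :=
    fun j => ((v / P : ℝ) : ℂ) • (1 : Matrix (Fin nt) (Fin nt) ℂ) - D j with hΦdef
  have hcyc : ∀ j (L : Matrix (Fin nt) (Fin nt) ℂ), (Φ j * (L * Lᴴ)).trace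
      = (Lᴴ * Φ j * L).trace := by
    intro j L
    rw [← Matrix.mul_assoc, trace_mul_comm, Matrix.mul_assoc]
  have hnn : ∀ j, 0 ≤ (Φ j * q j).trace := by
    intro j
    obtain ⟨L, hL⟩ := exists_eq_mul_conjTranspose (hq j)
    rw [hL, hcyc]
    exact ((hΦ j).conjTranspose_mul_mul_same L).trace_nonneg
  have hsum : ∑ j, (Φ j * q j).trace.re ≤ 0 := by
    have : ∑ j, (Φ j * q j).trace.re = v / P * ∑ j, (q j).trace.re - v := by
      simp only [hΦdef, Matrix.sub_mul, trace_sub, Complex.sub_re, Matrix.smul_mul,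
        Matrix.one_mul, trace_smul, smul_eq_mul, Complex.re_ofReal_mul, Finset.sum_sub_distrib,
        Finset.mul_sum, hv]
    rw [this]
    have := mul_le_mul_of_nonneg_left hqP (div_nonneg hv0 hP.le)
    rw [div_mul_cancel₀ _ hP.ne'] at this
    linarith
  intro j L hL
  have hre : (Φ j * q j).trace.re = 0 :=
    (Finset.sum_eq_zero_iff_of_nonneg fun i _ => (Complex.nonneg_iff.1 (hnn i)).1).1
      (le_antisymm hsum (Finset.sum_nonneg fun i _ => (Complex.nonneg_iff.1 (hnn i)).1)) j
      (Finset.mem_univ j)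
  have htr : (Φ j * q j).trace = 0 := Complex.ext hre (Complex.nonneg_iff.1 (hnn j)).2.symm
  rw [hL, hcyc, ((hΦ j).conjTranspose_mul_mul_same L).trace_eq_zero_iff] at htr
  obtain ⟨M, hM⟩ := exists_eq_mul_conjTranspose (hΦ j)
  have hML : Mᴴ * L = 0 := by
    rw [← conjTranspose_mul_self_eq_zero, conjTranspose_mul, conjTranspose_conjTranspose, ← htr]
    simp only [hM, Matrix.mul_assoc]
  rw [hM, Matrix.mul_assoc, hML, Matrix.mul_zero]

end FirstOrder

/-! ### Maximizers and encoding orders -/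

section Maximizer

variable {K nt ne : ℕ} {n : Fin K → ℕ}

lemma continuous_logdetI_conj {X : Type*} [TopologicalSpace X] {m : ℕ}
    (H : Matrix (Fin m) (Fin nt) ℂ) {S : X → Matrix (Fin nt) (Fin nt) ℂ} (hS : Continuous S)
    (hp : ∀ x, (S x).PosSemidef) : Continuous fun x => logdetI (H * S x * Hᴴ) := by
  unfold logdetI
  refine Continuous.log ?_ fun x => (Complex.pos_iff.1 (posDef_one_add_conj H (hp x)).det_pos).1.ne'
  exact Complex.continuous_re.comp
    (continuous_const.add ((continuous_const.matrix_mul hS).matrix_mul continuous_const)).matrix_det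

lemma trace_re_mul_conjTranspose (L : Matrix (Fin nt) (Fin nt) ℂ) :
    (L * Lᴴ).trace.re = ∑ i, ∑ j, ‖L i j‖ ^ 2 := by
  simp only [trace, diag_apply, Matrix.mul_apply, conjTranspose_apply, Complex.re_sum]
  refine Finset.sum_congr rfl fun i _ => Finset.sum_congr rfl fun j _ => ?_
  rw [Complex.star_def, Complex.mul_conj, Complex.ofReal_re, Complex.normSq_eq_norm_sq]

/-- The sum rate attains its maximum over the covariances meeting the power budget; compactness is
applied to the factors `L k` of `q k = L k * (L k)ᴴ`. -/
lemma exists_max_sum_posRate (H : ∀ k : Fin K, Matrix (Fin (n k)) (Fin nt) ℂ)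
    (G : Matrix (Fin ne) (Fin nt) ℂ) (π : Equiv.Perm (Fin K)) {P : ℝ} (hP : 0 ≤ P) :
    ∃ q : Fin K → Matrix (Fin nt) (Fin nt) ℂ, (∀ k, (q k).PosSemidef) ∧
      ∑ k, (q k).trace.re ≤ P ∧
      ∀ Z : Fin K → Matrix (Fin nt) (Fin nt) ℂ, (∀ k, (Z k).PosSemidef) →
        ∑ k, (Z k).trace.re ≤ P → ∑ k, posRate H G π Z k ≤ ∑ k, posRate H G π q k := by
  let F : (Fin K → Fin nt → Fin nt → ℂ) → Fin K → Matrix (Fin nt) (Fin nt) ℂ :=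
    fun L k => Matrix.of (L k) * (Matrix.of (L k))ᴴ
  have hFc : ∀ k, Continuous fun L => F L k := fun k => by
    have h1 : Continuous fun L : Fin K → Fin nt → Fin nt → ℂ => Matrix.of (L k) :=
      continuous_apply k
    exact h1.matrix_mul h1.matrix_conjTranspose
  have hFp : ∀ L k, (F L k).PosSemidef := fun L k => posSemidef_self_mul_conjTranspose _
  have hsc : ∀ T : Finset (Fin K), Continuous fun L => ∑ j ∈ T, F L j := fun T =>
    continuous_finsetSum _ fun j _ => hFc j
  have hsp : ∀ (T : Finset (Fin K)) L, (∑ j ∈ T, F L j).PosSemidef := fun T L =>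
    posSemidef_sum _ fun j _ => hFp L j
  have hobj : Continuous fun L => ∑ k, posRate H G π (F L) k := by
    refine continuous_finsetSum _ fun k _ => ?_
    simp only [posRate, rateAt]
    exact (((continuous_logdetI_conj _ (hsc _) (hsp _)).sub
      (continuous_logdetI_conj _ (hsc _) (hsp _))).sub
      (continuous_logdetI_conj _ (hsc _) (hsp _))).add (continuous_logdetI_conj _ (hsc _) (hsp _))
  have htr : ∀ L k, (F L k).trace.re = ∑ i, ∑ j, ‖L k i j‖ ^ 2 := fun L k =>
    trace_re_mul_conjTranspose _
  let C : Set (Fin K → Fin nt → Fin nt → ℂ) := {L | ∑ k, (F L k).trace.re ≤ P}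
  have hCc : IsClosed C := by
    refine isClosed_le (continuous_finsetSum _ fun k _ => ?_) continuous_const
    exact Complex.continuous_re.comp (hFc k).matrix_trace
  have hCb : C ⊆ Metric.closedBall 0 (Real.sqrt P) := by
    intro L hL
    rw [mem_closedBall_zero_iff, pi_norm_le_iff_of_nonneg (Real.sqrt_nonneg _)]
    intro k
    rw [pi_norm_le_iff_of_nonneg (Real.sqrt_nonneg _)]
    intro i
    rw [pi_norm_le_iff_of_nonneg (Real.sqrt_nonneg _)]
    intro j
    refine Real.le_sqrt_of_sq_le (le_trans ?_ hL)
    simp only [htr]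
    calc ‖L k i j‖ ^ 2 ≤ ∑ j, ‖L k i j‖ ^ 2 :=
          Finset.single_le_sum (f := fun j => ‖L k i j‖ ^ 2) (fun _ _ => by positivity)
            (Finset.mem_univ j)
      _ ≤ ∑ i, ∑ j, ‖L k i j‖ ^ 2 :=
          Finset.single_le_sum (f := fun i => ∑ j, ‖L k i j‖ ^ 2) (fun _ _ => by positivity)
            (Finset.mem_univ i)
      _ ≤ ∑ k, ∑ i, ∑ j, ‖L k i j‖ ^ 2 :=
          Finset.single_le_sum (f := fun k => ∑ i, ∑ j, ‖L k i j‖ ^ 2) (fun _ _ => by positivity)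
            (Finset.mem_univ k)
  have hC : IsCompact C := (isCompact_closedBall _ _).of_isClosed_subset hCc hCb
  have hne : C.Nonempty := ⟨0, by
    change ∑ k, (F 0 k).trace.re ≤ P
    simpa [htr] using hP⟩
  obtain ⟨L, hL, hmax⟩ := hC.exists_isMaxOn hne hobj.continuousOn
  refine ⟨F L, hFp L, hL, fun Z hZ hZP => ?_⟩
  choose M hM using fun k => exists_eq_mul_conjTranspose (hZ k)
  have hZF : Z = F M := funext hM
  rw [hZF] at hZP ⊢
  exact hmax hZP

end Maximizer

section Nonneg

variable {N nt ne : ℕ} {n : Fin (N + 1) → ℕ}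

lemma posSemidef_trace_zero {q : Matrix (Fin nt) (Fin nt) ℂ} (hq : q.PosSemidef)
    (h : q.trace.re = 0) : q = 0 :=
  hq.trace_eq_zero_iff.1 (Complex.ext h (Complex.nonneg_iff.1 hq.trace_nonneg).2.symm)

/-- At a maximizer of the sum rate, subject only to the power budget, no rate is negative. -/
lemma posRate_nonneg_of_max (H : ∀ k : Fin (N + 1), Matrix (Fin (n k)) (Fin nt) ℂ)
    (G : Matrix (Fin ne) (Fin nt) ℂ) (π : Equiv.Perm (Fin (N + 1))) {P : ℝ} (hP : 0 ≤ P)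
    {q : Fin (N + 1) → Matrix (Fin nt) (Fin nt) ℂ} (hq : ∀ k, (q k).PosSemidef)
    (hqP : ∑ k, (q k).trace.re ≤ P)
    (hmax : ∀ Z : Fin (N + 1) → Matrix (Fin nt) (Fin nt) ℂ, (∀ k, (Z k).PosSemidef) →
        ∑ k, (Z k).trace.re ≤ P → ∑ k, posRate H G π Z k ≤ ∑ k, posRate H G π q k)
    (k : Fin (N + 1)) : 0 ≤ posRate H G π q k := by
  rcases hP.eq_or_lt with rfl | hP
  · have hnn : ∀ i ∈ (Finset.univ : Finset (Fin (N + 1))), 0 ≤ (q i).trace.re := fun i _ =>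
      (Complex.nonneg_iff.1 (hq i).trace_nonneg).1
    have h0 : ∀ i, q i = 0 := fun i => posSemidef_trace_zero (hq i)
      ((Finset.sum_eq_zero_iff_of_nonneg hnn).1 (le_antisymm hqP (Finset.sum_nonneg hnn)) i
        (Finset.mem_univ i))
    simp [posRate, rateAt, h0]
  have hs : ∀ T : Finset (Fin (N + 1)), (∑ i ∈ T, q i).PosSemidef := fun T =>
    posSemidef_sum _ fun i _ => hq i
  obtain ⟨c, hc, hΦ, hΦL⟩ := exists_multiplier hP (sumRateGrad_isHermitian H G π hq) hq hqP (by
    intro Z hZ hZP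
    have hd := deriv_nonpos_of_max (hasDerivAt_sum_posRate H G π hq (fun j => Z j - q j)) (by
      intro t ht0 ht1
      have e : ∀ j, q j + (t : ℂ) • (Z j - q j) = ((1 - t : ℝ) : ℂ) • q j + (t : ℂ) • Z j := by
        intro j; push_cast; module
      simp only [e]
      refine (hmax _ (fun j => ?_) ?_).trans (le_of_eq (by simp))
      · exact ((hq j).smul (Complex.zero_le_real.2 (sub_nonneg.2 ht1))).add
          ((hZ j).smul (Complex.zero_le_real.2 ht0))
      · simp only [trace_add, trace_smul, smul_eq_mul, Complex.add_re, Complex.re_ofReal_mul,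
          Finset.sum_add_distrib, ← Finset.mul_sum]
        nlinarith)
    simpa [Matrix.mul_sub, trace_sub, Finset.sum_sub_distrib] using hd)
  -- the rate at `k` is nonnegative once `∇f + Φ - ∇g` is positive semidefinite at the sum from `k`
  have hstep : ∀ k, (logdetGrad (H (π k)) (∑ i ∈ Finset.univ.filter (fun i => k ≤ i), q i)
        + ((c : ℂ) • 1 - sumRateGrad H G π q k)
        - logdetGrad G (∑ i ∈ Finset.univ.filter (fun i => k ≤ i), q i)).PosSemidef →
      (logdetGrad (H (π k)) (∑ i ∈ Finset.univ.filter (fun i => k < i), q i)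
        + ((c : ℂ) • 1 - sumRateGrad H G π q k)
        - logdetGrad G (∑ i ∈ Finset.univ.filter (fun i => k < i), q i)).PosSemidef ∧
      0 ≤ posRate H G π q k := by
    intro k hk
    obtain ⟨L, hL⟩ := exists_eq_mul_conjTranspose (hq k)
    have hsplit : ∑ i ∈ Finset.univ.filter (fun i => k ≤ i), q i
        = ∑ i ∈ Finset.univ.filter (fun i => k < i), q i + L * Lᴴ := by
      have : Finset.univ.filter (fun i => k ≤ i)
          = insert k (Finset.univ.filter (fun i => k < i)) := by
        ext j; simp [le_iff_eq_or_lt, eq_comm]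
      rw [this, Finset.sum_insert (by simp), add_comm, hL]
    unfold posRate rateAt
    rw [hsplit] at hk ⊢
    exact rate_step _ _ (hs _) (hΦ k) (hΦL k L hL) hk
  refine (hstep k ?_).2
  induction k using Fin.induction with
  | zero =>
    have h1 : Finset.univ.filter (fun k : Fin (N + 1) => k ≤ 0) = {0} := by
      ext j; simp
    have h2 : Finset.univ.filter (fun k : Fin (N + 1) => k < 0) = ∅ := by
      ext j; simp
    have e : sumRateGrad H G π q 0
        = logdetGrad (H (π 0)) (∑ i ∈ Finset.univ.filter (fun i => 0 ≤ i), q i)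
          - logdetGrad G (∑ i ∈ Finset.univ.filter (fun i => 0 ≤ i), q i) := by
      rw [sumRateGrad, h1, h2, Finset.sum_singleton, Finset.sum_empty, sub_zero]
    have hcp : ((c : ℂ) • (1 : Matrix (Fin nt) (Fin nt) ℂ)).PosSemidef :=
      PosSemidef.one.smul (Complex.zero_le_real.2 hc)
    convert hcp using 1
    rw [e]; abel
  | succ i ih =>
    have h1 : Finset.univ.filter (fun k : Fin (N + 1) => k ≤ i.succ)
        = insert i.succ (Finset.univ.filter (fun k => k ≤ i.castSucc)) := by
      ext j; simp [le_iff_eq_or_lt (b := i.succ), ← Fin.le_castSucc_iff]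
    have h2 : Finset.univ.filter (fun k : Fin (N + 1) => k < i.succ)
        = insert i.castSucc (Finset.univ.filter (fun k => k < i.castSucc)) := by
      ext j; simp [← Fin.le_castSucc_iff, le_iff_eq_or_lt]
    have h3 : Finset.univ.filter (fun k : Fin (N + 1) => i.castSucc < k)
        = Finset.univ.filter (fun k => i.succ ≤ k) := by
      ext j; simp [Fin.castSucc_lt_iff_succ_le]
    have e : sumRateGrad H G π q i.succ = sumRateGrad H G π q i.castSucc
        + (logdetGrad (H (π i.succ)) (∑ j ∈ Finset.univ.filter (fun j => i.succ ≤ j), q j)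
          - logdetGrad G (∑ j ∈ Finset.univ.filter (fun j => i.succ ≤ j), q j))
        - (logdetGrad (H (π i.castSucc)) (∑ j ∈ Finset.univ.filter (fun j => i.castSucc < j), q j)
          - logdetGrad G (∑ j ∈ Finset.univ.filter (fun j => i.castSucc < j), q j)) := by
      rw [sumRateGrad, h1, h2, Finset.sum_insert (by simp), Finset.sum_insert (by simp),
        sumRateGrad]
      abel
    have hk := (hstep _ ih).1
    convert hk using 1
    rw [e, h3]; abel

end Nonneg

section Orders

variable {N nt ne : ℕ} {n : Fin (N + 1) → ℕ}

/-- Any encoding order does at least as well as any other one, with the same total covariance, when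
rates are allowed to be negative. -/
lemma exists_reorder (H : ∀ k : Fin (N + 1), Matrix (Fin (n k)) (Fin nt) ℂ)
    (G : Matrix (Fin ne) (Fin nt) ℂ) (ρ σ : Equiv.Perm (Fin (N + 1)))
    {q : Fin (N + 1) → Matrix (Fin nt) (Fin nt) ℂ} (hq : ∀ k, (q k).PosSemidef) :
    ∃ q' : Fin (N + 1) → Matrix (Fin nt) (Fin nt) ℂ, (∀ k, (q' k).PosSemidef) ∧
      ∑ k, q' k = ∑ k, q k ∧
      ∑ k, posRate H G σ q k ≤ ∑ k, posRate H G (σ * ρ) q' k := by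
  have hρ : ρ ∈ Submonoid.closure
      (Set.range fun i : Fin N ↦ Equiv.swap i.castSucc i.succ) := by
    rw [Equiv.Perm.mclosure_swap_castSucc_succ]; trivial
  induction hρ using Submonoid.closure_induction generalizing σ q with
  | mem x hx =>
    obtain ⟨i, rfl⟩ := hx
    exact exists_adjacent_swap_s1 H G σ i hq
  | one => exact ⟨q, hq, rfl, by simp⟩
  | mul x y _ _ hx hy =>
    obtain ⟨q₁, h₁, e₁, l₁⟩ := hx σ hq
    obtain ⟨q₂, h₂, e₂, l₂⟩ := hy (σ * x) h₁
    exact ⟨q₂, h₂, e₂.trans e₁, l₁.trans (by rwa [mul_assoc] at l₂)⟩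

lemma sum_trace_re {q q' : Fin (N + 1) → Matrix (Fin nt) (Fin nt) ℂ}
    (h : ∑ k, q' k = ∑ k, q k) : ∑ k, (q' k).trace.re = ∑ k, (q k).trace.re := by
  simpa [trace_sum] using congrArg (fun M : Matrix (Fin nt) (Fin nt) ℂ => M.trace.re) h

/-- `phi` is the maximum of the sum rate without the nonnegativity constraints, times `w`. -/
lemma phi_eq_mul_max (H : ∀ k : Fin (N + 1), Matrix (Fin (n k)) (Fin nt) ℂ)
    (G : Matrix (Fin ne) (Fin nt) ℂ) (π : Equiv.Perm (Fin (N + 1))) {P w : ℝ} (hP : 0 ≤ P)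
    (hw : 0 ≤ w) {q : Fin (N + 1) → Matrix (Fin nt) (Fin nt) ℂ} (hq : ∀ k, (q k).PosSemidef)
    (hqP : ∑ k, (q k).trace.re ≤ P)
    (hmax : ∀ Z : Fin (N + 1) → Matrix (Fin nt) (Fin nt) ℂ, (∀ k, (Z k).PosSemidef) →
        ∑ k, (Z k).trace.re ≤ P → ∑ k, posRate H G π Z k ≤ ∑ k, posRate H G π q k) :
    phi H G P (fun _ => w) π = w * ∑ k, posRate H G π q k := by
  refine IsGreatest.csSup_eq ⟨⟨fun u => q (π.symm u), fun k => hq _, ?_, ?_, ?_⟩, ?_⟩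
  · rw [Equiv.sum_comp π.symm (fun k => (q k).trace.re)]; exact hqP
  · intro k
    rw [secrecyRate_eq_posRate]
    simpa using posRate_nonneg_of_max H G π hP hq hqP hmax k
  · simp [secrecyRate_eq_posRate, Finset.mul_sum]
  · rintro r ⟨Q, hQ, hQP, -, rfl⟩
    rw [← Finset.mul_sum]
    refine mul_le_mul_of_nonneg_left (hmax (fun j => Q (π j)) (fun k => hQ _) ?_) hw
    rw [Equiv.sum_comp π (fun k => (Q k).trace.re)]; exact hQP

end Orders

/-- With equal weights, all encoding orders yield the same optimal secrecy sum rate. -/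
theorem equal_weights_order_irrelevant (K nt ne : ℕ) (hK : 1 ≤ K) (n : Fin K → ℕ)
    (H : ∀ k : Fin K, Matrix (Fin (n k)) (Fin nt) ℂ)
    (G : Matrix (Fin ne) (Fin nt) ℂ) (P : ℝ) (hP : 0 ≤ P)
    (w : ℝ) (hw : 0 ≤ w)
    (σ τ : Equiv.Perm (Fin K)) :
    phi H G P (fun _ => w) σ = phi H G P (fun _ => w) τ := by
  obtain ⟨N, rfl⟩ : ∃ N, K = N + 1 := ⟨K - 1, by omega⟩
  have key : ∀ α β : Equiv.Perm (Fin (N + 1)),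
      phi H G P (fun _ => w) α ≤ phi H G P (fun _ => w) β := by
    intro α β
    obtain ⟨q, hq, hqP, hmax⟩ := exists_max_sum_posRate H G α hP
    obtain ⟨q', hq', hqP', hmax'⟩ := exists_max_sum_posRate H G β hP
    rw [phi_eq_mul_max H G α hP hw hq hqP hmax,
      phi_eq_mul_max H G β hP hw hq' hqP' hmax']
    obtain ⟨r, hr, hsum, hle⟩ := exists_reorder H G (α⁻¹ * β) α hq
    rw [mul_inv_cancel_left] at hle
    exact mul_le_mul_of_nonneg_left
      (hle.trans (hmax' r hr ((sum_trace_re hsum).le.trans hqP))) hw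
  exact le_antisymm (key σ τ) (key τ σ)
end

section
/- Fix K ≥ 1, channel matrices H_k ∈ ℂ^{n_k×n_t} (k = 1,…,K) and G ∈ ℂ^{n_e×n_t}. Let Q_1,…,Q_K be Hermitian positive semidefinite n_t×n_t complex matrices and Σ_1,…,Σ_K Hermitian positive semidefinite matrices (Σ_k of size n_k×n_k) such that (i) R^MAC_j(Σ_1,…,Σ_K) = R^BC_j(Q_1,…,Q_K) for every j = 1,…,K, and (ii) the secrecy rate R_j (under the identity order) is ≥ 0 for every j = 1,…,K. Then for every k = 1,…,K: log det(I + Σ_{j=k}^K H_jᴴΣ_jH_j) ≥ log det(I + G(Σ_{j=k}^K Q_j)Gᴴ). -/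
/-!
By duality and nonnegativity of the secrecy rates, each MAC rate `RMAC j` is at least the increment
of the eavesdropper's log-determinant between the tails starting at `j + 1` and at `j`. Both sides
telescope over `j ≥ k`: with `A = ∑ j < k, (H j)ᴴ * Sg j * H j` and
`B = ∑ j ≥ k, (H j)ᴴ * Sg j * H j`, the eavesdropper's log-determinant for the tail `k` is at most
`log det (1 + (A + B)) - log det (1 + A)`.

It remains to see `det (1 + (A + B)) ≤ det (1 + A) * det (1 + B)` for positive semidefinite `A`, `B`.
Writing `B = Cᴴ * C`, the Weinstein–Aronszajn identity gives
`det (1 + (A + B)) = det (1 + A) * det (1 + C * (1 + A)⁻¹ * Cᴴ)`, and since `(1 + A)⁻¹ ≤ 1` the last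
factor is at most `det (1 + C * Cᴴ) = det (1 + B)` by monotonicity of the determinant.
-/

open Matrix Finset ComplexOrder

/-- BC rate of user `k` (encoding order `1, …, K`). -/
noncomputable def RBC {K nt : ℕ} {n : Fin K → ℕ}
    (H : ∀ k : Fin K, Matrix (Fin (n k)) (Fin nt) ℂ)
    (Q : Fin K → Matrix (Fin nt) (Fin nt) ℂ) (k : Fin K) : ℝ :=
  logdetI (H k * (∑ j ∈ Finset.univ.filter (fun j => k ≤ j), Q j) * (H k)ᴴ)
    - logdetI (H k * (∑ j ∈ Finset.univ.filter (fun j => k < j), Q j) * (H k)ᴴ)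

/-- MAC rate of user `k` (decoding order `1, …, K`). -/
noncomputable def RMAC {K nt : ℕ} {n : Fin K → ℕ}
    (H : ∀ k : Fin K, Matrix (Fin (n k)) (Fin nt) ℂ)
    (Sg : ∀ k : Fin K, Matrix (Fin (n k)) (Fin (n k)) ℂ) (k : Fin K) : ℝ :=
  logdetI (∑ j ∈ Finset.univ.filter (fun j => j ≤ k), (H j)ᴴ * Sg j * H j)
    - logdetI (∑ j ∈ Finset.univ.filter (fun j => j < k), (H j)ᴴ * Sg j * H j)

/-- Secrecy rate of user `k` under the identity encoding order. -/
noncomputable def Rsec {K nt ne : ℕ} {n : Fin K → ℕ}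
    (H : ∀ k : Fin K, Matrix (Fin (n k)) (Fin nt) ℂ)
    (G : Matrix (Fin ne) (Fin nt) ℂ)
    (Q : Fin K → Matrix (Fin nt) (Fin nt) ℂ) (k : Fin K) : ℝ :=
  RBC H Q k
    - logdetI (G * (∑ j ∈ Finset.univ.filter (fun j => k ≤ j), Q j) * Gᴴ)
    + logdetI (G * (∑ j ∈ Finset.univ.filter (fun j => k < j), Q j) * Gᴴ)

section DetInequalities

variable {m : ℕ}

theorem one_le_det_one_add_s4 {P : Matrix (Fin m) (Fin m) ℂ} (hP : P.PosSemidef) :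
    1 ≤ (1 + P).det := by
  -- `det (1 + P)` is the product of `1 + λ` over the eigenvalues `λ` of `P`.
  have hdet : (1 + P).det = ∏ i, (1 + (hP.1.eigenvalues i : ℂ)) := by
    conv_lhs => rw [hP.1.spectral_theorem, Unitary.conjStarAlgAut_apply]
    rw [det_one_add_mul_comm, ← mul_assoc, Unitary.coe_star_mul_self, one_mul,
      ← diagonal_one, diagonal_add, det_diagonal]
    simp
  have hreal : (1 : ℝ) ≤ ∏ i, (1 + hP.1.eigenvalues i) :=
    Finset.one_le_prod fun i _ => by
      simpa using hP.eigenvalues_nonneg i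
  rw [hdet]
  exact_mod_cast hreal

open scoped MatrixOrder in
theorem exists_conjTranspose_mul_self {B : Matrix (Fin m) (Fin m) ℂ} (hB : B.PosSemidef) :
    ∃ C : Matrix (Fin m) (Fin m) ℂ, B = Cᴴ * C :=
  CStarAlgebra.nonneg_iff_eq_star_mul_self.mp hB.nonneg

theorem det_add_factor {M : Matrix (Fin m) (Fin m) ℂ} (hM : M.PosDef)
    (C : Matrix (Fin m) (Fin m) ℂ) :
    (M + Cᴴ * C).det = M.det * (1 + C * M⁻¹ * Cᴴ).det := by
  have hu : IsUnit M.det := (isUnit_iff_isUnit_det M).1 hM.isUnit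
  rw [Matrix.mul_assoc, ← det_one_add_mul_comm (M⁻¹ * Cᴴ) C, ← det_mul]
  congr 1
  rw [Matrix.mul_add, Matrix.mul_one, Matrix.mul_assoc, mul_nonsing_inv_cancel_left _ _ hu]

theorem det_le_det_add_s4 {M D : Matrix (Fin m) (Fin m) ℂ} (hM : M.PosDef) (hD : D.PosSemidef) :
    M.det ≤ (M + D).det := by
  obtain ⟨C, rfl⟩ := exists_conjTranspose_mul_self hD
  rw [det_add_factor hM]
  exact le_mul_of_one_le_right hM.det_pos.le
    (one_le_det_one_add_s4 (hM.inv.posSemidef.mul_mul_conjTranspose_same C))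

theorem posDef_one_add_s4 {A : Matrix (Fin m) (Fin m) ℂ} (hA : A.PosSemidef) : (1 + A).PosDef :=
  PosDef.one.add_posSemidef hA

theorem posSemidef_one_sub_inv {A : Matrix (Fin m) (Fin m) ℂ} (hA : A.PosSemidef) :
    (1 - (1 + A)⁻¹).PosSemidef := by
  have hM := posDef_one_add_s4 hA
  have hu : IsUnit (1 + A).det := (isUnit_iff_isUnit_det _).1 hM.isUnit
  have hN : (A + Aᴴ * A).PosSemidef := hA.add (posSemidef_conjTranspose_mul_self A)
  -- `1 - (1 + A)⁻¹ = (1 + A)⁻¹ * (A + A * A) * (1 + A)⁻¹`, a congruence of `A + Aᴴ * A`.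
  have hfac : A + Aᴴ * A = (1 + A) * A := by
    rw [hA.1.eq, Matrix.add_mul, Matrix.one_mul]
  have hcomm : A * (1 + A)⁻¹ = 1 - (1 + A)⁻¹ := by
    rw [eq_sub_iff_add_eq]
    nth_rewrite 2 [← Matrix.one_mul (1 + A)⁻¹]
    rw [← Matrix.add_mul, add_comm A 1, mul_nonsing_inv _ hu]
  have h := hN.mul_mul_conjTranspose_same (1 + A)⁻¹
  rwa [hM.inv.1.eq, hfac, nonsing_inv_mul_cancel_left _ _ hu, hcomm] at h

/-- Submultiplicativity of `B ↦ det (1 + B)` on sums of positive semidefinite matrices. -/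
theorem det_one_add_add_le {A B : Matrix (Fin m) (Fin m) ℂ} (hA : A.PosSemidef)
    (hB : B.PosSemidef) : (1 + (A + B)).det ≤ (1 + A).det * (1 + B).det := by
  obtain ⟨C, rfl⟩ := exists_conjTranspose_mul_self hB
  have hM := posDef_one_add_s4 hA
  rw [← add_assoc, det_add_factor hM]
  refine mul_le_mul_of_nonneg_left ?_ hM.det_pos.le
  rw [det_one_add_mul_comm Cᴴ C]
  have hle := det_le_det_add_s4
    (posDef_one_add_s4 (hM.inv.posSemidef.mul_mul_conjTranspose_same C))
    ((posSemidef_one_sub_inv hA).mul_mul_conjTranspose_same C)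
  have hsum : 1 + C * (1 + A)⁻¹ * Cᴴ + C * (1 - (1 + A)⁻¹) * Cᴴ = 1 + C * Cᴴ := by
    rw [Matrix.mul_sub, Matrix.sub_mul, Matrix.mul_one]
    abel
  rwa [hsum] at hle

theorem logdetI_add_le {A B : Matrix (Fin m) (Fin m) ℂ} (hA : A.PosSemidef)
    (hB : B.PosSemidef) : logdetI (A + B) ≤ logdetI A + logdetI B := by
  unfold logdetI
  have hpos : ∀ {P : Matrix (Fin m) (Fin m) ℂ}, P.PosSemidef →
      0 < (1 + P).det.re ∧ (1 + P).det.im = 0 := fun hP => by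
    have h := Complex.lt_def.1 (posDef_one_add_s4 hP).det_pos
    exact ⟨h.1, h.2.symm⟩
  have hle := (Complex.le_def.1 (det_one_add_add_le hA hB)).1
  rw [Complex.mul_re, (hpos hA).2, zero_mul, sub_zero] at hle
  rw [← Real.log_mul (hpos hA).1.ne' (hpos hB).1.ne']
  exact Real.log_le_log (hpos (hA.add hB)).1 hle

end DetInequalities

/-- If the MAC rates match the BC rates and all secrecy rates are nonnegative, then
the tail MAC log-determinant dominates the eavesdropper log-determinant. -/
theorem tail_mac_dominates_eve (K nt ne : ℕ) (hK : 1 ≤ K) (n : Fin K → ℕ)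
    (H : ∀ k : Fin K, Matrix (Fin (n k)) (Fin nt) ℂ)
    (G : Matrix (Fin ne) (Fin nt) ℂ)
    (Q : Fin K → Matrix (Fin nt) (Fin nt) ℂ) (hQ : ∀ k, (Q k).PosSemidef)
    (Sg : ∀ k : Fin K, Matrix (Fin (n k)) (Fin (n k)) ℂ)
    (hSg : ∀ k, (Sg k).PosSemidef)
    (hdual : ∀ j, RMAC H Sg j = RBC H Q j)
    (hsec : ∀ j, 0 ≤ Rsec H G Q j) :
    ∀ k : Fin K,
      logdetI (G * (∑ j ∈ Finset.univ.filter (fun j => k ≤ j), Q j) * Gᴴ) ≤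
        logdetI (∑ j ∈ Finset.univ.filter (fun j => k ≤ j), (H j)ᴴ * Sg j * H j) := by
  intro k
  -- Tails are indexed by `t : ℕ` with `t ≤ K`, so that the empty tail `t = K` starts the induction.
  have htel : ∀ t ≤ K,
      logdetI (G * (∑ j ∈ Finset.univ.filter (fun j : Fin K => t ≤ j.val), Q j) * Gᴴ) ≤
        logdetI (∑ j, (H j)ᴴ * Sg j * H j) -
        logdetI (∑ j ∈ Finset.univ.filter (fun j : Fin K => j.val < t),
          (H j)ᴴ * Sg j * H j) := by
    intro t ht
    induction ht using Nat.decreasingInduction with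
    | self =>
      have h1 : Finset.univ.filter (fun j : Fin K => K ≤ j.val) = ∅ :=
        Finset.filter_false_of_mem fun j _ => not_le.2 j.isLt
      have h2 : Finset.univ.filter (fun j : Fin K => j.val < K) = Finset.univ :=
        Finset.filter_true_of_mem fun j _ => j.isLt
      rw [h1, h2]
      simp [logdetI]
    | of_succ t ht ih =>
      have hs := hsec ⟨t, ht⟩
      have hd := hdual ⟨t, ht⟩
      unfold Rsec at hs
      rw [← hd] at hs
      unfold RMAC at hs
      simp only [Fin.le_def, Fin.lt_def] at hs
      simp only [Nat.succ_le_iff, Nat.lt_succ_iff] at ih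
      linarith
  have hB : ∀ s : Finset (Fin K), (∑ j ∈ s, (H j)ᴴ * Sg j * H j).PosSemidef := fun s =>
    posSemidef_sum s fun j _ => (hSg j).conjTranspose_mul_mul_same (H j)
  have hk := htel k.val k.isLt.le
  have hsplit := logdetI_add_le (hB (Finset.univ.filter (fun j : Fin K => j.val < k.val)))
    (hB (Finset.univ.filter (fun j : Fin K => ¬ j.val < k.val)))
  rw [Finset.sum_filter_add_sum_filter_not] at hsplit
  simp only [not_lt] at hsplit
  simp only [Fin.le_def]
  linarith
end

section
/- Fix a matrix H ∈ ℂ^{m×n} and Hermitian positive semidefinite n×n matrices A and B with A − B positive semidefinite (i.e., A ⪰ B ⪰ 0). The function Q ↦ log det(I + H(A + Q)Hᴴ) − log det(I + H(B + Q)Hᴴ), viewed as a real-valued function on the convex set of n×n Hermitian positive semidefinite complex matrices, is convex. -/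
/-!
Writing `X = I + H(B + Q)Hᴴ` and `W = H(A - B)Hᴴ ⪰ 0`, the function is `log det (X + W) - log det X`
with `X` affine in `Q` and positive definite. Since `W` is a sum of rank-one terms `w wᴴ`,
telescoping reduces the claim to convexity of
`log det (X + w wᴴ) - log det X = log (1 + wᴴ X⁻¹ w)` on positive definite matrices
(`log_quad_inv_convexOn`, via the matrix determinant lemma).

For the latter, fix `Z` positive definite, and let `v = Z⁻¹ w`, `p = wᴴ Z⁻¹ w`, `q = wᴴ X⁻¹ w`.
Cauchy-Schwarz for the form `X` gives `p² ≤ q · vᴴXv`, whence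
`log (1 + q) ≥ log (1 + p) + (p - vᴴXv) / (1 + p)`. The right-hand side is affine in `X` and agrees
with the left-hand side at `X = Z`, so it is a supporting affine function (`log_quad_inv_support`).
-/

open Matrix ComplexOrder

/-- The real quadratic form `vᴴ X v`. -/
noncomputable def quadRe {m : ℕ} (X : Matrix (Fin m) (Fin m) ℂ) (v : Fin m → ℂ) : ℝ :=
  (star v ⬝ᵥ (X *ᵥ v)).re

lemma quadRe_nonneg {m : ℕ} {X : Matrix (Fin m) (Fin m) ℂ} (hX : X.PosSemidef)
    (v : Fin m → ℂ) : 0 ≤ quadRe X v :=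
  (Complex.le_def.1 (hX.dotProduct_mulVec_nonneg v)).1

lemma quadRe_combo {m : ℕ} (X Y : Matrix (Fin m) (Fin m) ℂ) (a b : ℝ) (v : Fin m → ℂ) :
    quadRe (a • X + b • Y) v = a * quadRe X v + b * quadRe Y v := by
  simp [quadRe, Matrix.add_mulVec, Matrix.smul_mulVec, dotProduct_add, dotProduct_smul]

lemma mulVec_inv_mulVec_of_posDef {m : ℕ} {X : Matrix (Fin m) (Fin m) ℂ} (hX : X.PosDef)
    (w : Fin m → ℂ) : X *ᵥ (X⁻¹ *ᵥ w) = w := by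
  rw [Matrix.mulVec_mulVec, Matrix.mul_nonsing_inv _ ((Matrix.isUnit_iff_isUnit_det X).1 hX.isUnit),
    Matrix.one_mulVec]

lemma star_inv_mulVec_dotProduct {m : ℕ} {X : Matrix (Fin m) (Fin m) ℂ} (hX : X.PosDef)
    (w : Fin m → ℂ) : star (X⁻¹ *ᵥ w) ⬝ᵥ w = star w ⬝ᵥ (X⁻¹ *ᵥ w) := by
  rw [Matrix.star_mulVec, hX.inv.isHermitian.eq, ← Matrix.dotProduct_mulVec]

/-- At `v = Z⁻¹ w` the form of `Z` takes the value `wᴴ Z⁻¹ w`. -/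
lemma quadRe_self_inv {m : ℕ} {Z : Matrix (Fin m) (Fin m) ℂ} (hZ : Z.PosDef)
    (w : Fin m → ℂ) : quadRe Z (Z⁻¹ *ᵥ w) = quadRe Z⁻¹ w := by
  rw [quadRe, mulVec_inv_mulVec_of_posDef hZ, star_inv_mulVec_dotProduct hZ, quadRe]

/-- The expansion of `(X⁻¹w - t Z⁻¹w)ᴴ X (X⁻¹w - t Z⁻¹w) ≥ 0` in powers of the real `t`. -/
lemma quadRe_expand_nonneg {m : ℕ} {X Z : Matrix (Fin m) (Fin m) ℂ} (hX : X.PosDef)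
    (hZ : Z.PosDef) (w : Fin m → ℂ) (t : ℝ) :
    0 ≤ quadRe X (Z⁻¹ *ᵥ w) * (t * t) + (-2 * quadRe Z⁻¹ w) * t + quadRe X⁻¹ w := by
  have h := quadRe_nonneg hX.posSemidef (X⁻¹ *ᵥ w - t • (Z⁻¹ *ᵥ w))
  have hZ' := star_inv_mulVec_dotProduct hZ w
  have hX' := star_inv_mulVec_dotProduct hX w
  have hXZ : star (X⁻¹ *ᵥ w) ⬝ᵥ (X *ᵥ (Z⁻¹ *ᵥ w)) = star w ⬝ᵥ (Z⁻¹ *ᵥ w) := by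
    rw [Matrix.dotProduct_mulVec, ← hX.isHermitian.eq, ← Matrix.star_mulVec, hX.isHermitian.eq,
      mulVec_inv_mulVec_of_posDef hX]
  have e : quadRe X (X⁻¹ *ᵥ w - t • (Z⁻¹ *ᵥ w)) =
      quadRe X (Z⁻¹ *ᵥ w) * (t * t) + (-2 * quadRe Z⁻¹ w) * t + quadRe X⁻¹ w := by
    simp only [quadRe, Matrix.mulVec_sub, Matrix.mulVec_smul, star_sub, star_smul, sub_dotProduct,
      dotProduct_sub, smul_dotProduct, dotProduct_smul, mulVec_inv_mulVec_of_posDef hX, hZ', hX', hXZ,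
      star_trivial, Complex.sub_re, Complex.smul_re, smul_eq_mul]
    ring
  rwa [e] at h

/-- Supporting affine function, at `Z`, of `X ↦ log (1 + wᴴ X⁻¹ w)`. -/
lemma log_quad_inv_support {m : ℕ} {X Z : Matrix (Fin m) (Fin m) ℂ} (hX : X.PosDef)
    (hZ : Z.PosDef) (w : Fin m → ℂ) :
    Real.log (1 + quadRe Z⁻¹ w) +
        (quadRe Z⁻¹ w - quadRe X (Z⁻¹ *ᵥ w)) / (1 + quadRe Z⁻¹ w) ≤
      Real.log (1 + quadRe X⁻¹ w) := by
  have hexp := quadRe_expand_nonneg hX hZ w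
  have hp : 0 ≤ quadRe Z⁻¹ w := quadRe_nonneg hZ.inv.posSemidef w
  have hq : 0 ≤ quadRe X⁻¹ w := quadRe_nonneg hX.inv.posSemidef w
  generalize quadRe X (Z⁻¹ *ᵥ w) = s at *
  generalize quadRe Z⁻¹ w = p at *
  generalize quadRe X⁻¹ w = q at *
  have hd := discrim_le_zero hexp
  rw [discrim] at hd
  have h1 := hexp 1
  have hp1 : 0 < 1 + p := by linarith
  have hq1 : 0 < 1 + q := by linarith
  have hlog := Real.one_sub_inv_le_log_of_pos (div_pos hq1 hp1)
  rw [Real.log_div hq1.ne' hp1.ne', inv_div] at hlog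
  -- Cauchy-Schwarz `p² ≤ q s` and `2 p ≤ q + s` combine to `(1 + p)² ≤ (1 + q) (1 + s)`.
  have hcs : (1 + p) / (1 + q) ≤ (1 + s) / (1 + p) := by
    rw [div_le_div_iff₀ hq1 hp1]
    nlinarith
  have hs : (p - s) / (1 + p) = 1 - (1 + s) / (1 + p) := by
    field_simp
    ring
  linarith

lemma convex_posDef (m : ℕ) : Convex ℝ {X : Matrix (Fin m) (Fin m) ℂ | X.PosDef} := by
  rw [convex_iff_forall_pos]
  intro X hX Y hY a b ha hb _
  exact (hX.smul ha).add (hY.smul hb)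

lemma convex_posSemidef (n : ℕ) : Convex ℝ {X : Matrix (Fin n) (Fin n) ℂ | X.PosSemidef} := by
  intro X hX Y hY a b ha hb _
  exact (hX.smul ha).add (hY.smul hb)

lemma log_quad_inv_convexOn {m : ℕ} (w : Fin m → ℂ) :
    ConvexOn ℝ {X : Matrix (Fin m) (Fin m) ℂ | X.PosDef}
      (fun X => Real.log (1 + quadRe X⁻¹ w)) := by
  refine ⟨convex_posDef m, ?_⟩
  intro X hX Y hY a b ha hb hab
  have hZ : (a • X + b • Y).PosDef := convex_posDef m hX hY ha hb hab
  have h1 := mul_le_mul_of_nonneg_left (log_quad_inv_support hX hZ w) ha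
  have h2 := mul_le_mul_of_nonneg_left (log_quad_inv_support hY hZ w) hb
  have h3 := quadRe_self_inv hZ w
  rw [quadRe_combo] at h3
  simp only [smul_eq_mul]
  generalize a • X + b • Y = Z at *
  generalize Real.log (1 + quadRe Z⁻¹ w) = L at *
  have hLab : L = a * L + b * L := by rw [← add_mul, hab, one_mul]
  have h4 : a * ((quadRe Z⁻¹ w - quadRe X (Z⁻¹ *ᵥ w)) / (1 + quadRe Z⁻¹ w)) +
      b * ((quadRe Z⁻¹ w - quadRe Y (Z⁻¹ *ᵥ w)) / (1 + quadRe Z⁻¹ w)) = 0 := by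
    have : a * (quadRe Z⁻¹ w - quadRe X (Z⁻¹ *ᵥ w)) +
        b * (quadRe Z⁻¹ w - quadRe Y (Z⁻¹ *ᵥ w)) = 0 := by
      linear_combination quadRe Z⁻¹ w * hab - h3
    rw [← mul_div_assoc, ← mul_div_assoc, ← add_div, this, zero_div]
  linarith

/-- The matrix determinant lemma for a rank-one positive semidefinite update, in logarithmic
form. -/
lemma log_det_rank_one {m : ℕ} {X : Matrix (Fin m) (Fin m) ℂ} (hX : X.PosDef)
    (w : Fin m → ℂ) :
    Real.log (X + vecMulVec w (star w)).det.re - Real.log X.det.re =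
      Real.log (1 + quadRe X⁻¹ w) := by
  have hdet : (X + vecMulVec w (star w)).det = X.det * (1 + star w ⬝ᵥ (X⁻¹ *ᵥ w)) := by
    rw [vecMulVec_eq Unit, det_add_replicateCol_mul_replicateRow
      ((Matrix.isUnit_iff_isUnit_det X).1 hX.isUnit), Matrix.mul_assoc, ← replicateCol_mulVec,
      det_unique (n := Unit)]
    simp [Matrix.replicateRow_mul_replicateCol_apply]
  have hpos := Complex.lt_def.1 hX.det_pos
  simp only [Complex.zero_re, Complex.zero_im] at hpos
  have hq := quadRe_nonneg hX.inv.posSemidef w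
  rw [hdet, Complex.mul_re, ← hpos.2, zero_mul, sub_zero, Complex.add_re, Complex.one_re,
    ← quadRe, Real.log_mul hpos.1.ne' (by linarith)]
  ring

/-- Telescoping over the rank-one terms. -/
lemma log_det_add_sum_convexOn {m : ℕ} {ι : Type*} (s : Finset ι) (w : ι → Fin m → ℂ) :
    ConvexOn ℝ {X : Matrix (Fin m) (Fin m) ℂ | X.PosDef}
      (fun X => Real.log (X + ∑ i ∈ s, vecMulVec (w i) (star (w i))).det.re
        - Real.log X.det.re) := by
  classical
  induction s using Finset.induction_on with
  | empty => simpa using convexOn_const (0 : ℝ) (convex_posDef m)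
  | insert k s hk ih =>
    have hS : (∑ i ∈ s, vecMulVec (w i) (star (w i))).PosSemidef :=
      posSemidef_sum s fun i _ => posSemidef_vecMulVec_self_star (w i)
    set S := ∑ i ∈ s, vecMulVec (w i) (star (w i)) with hSdef
    have hshift := ((log_quad_inv_convexOn (w k)).translate_right S).subset
      (fun X (hX : X.PosDef) => PosDef.posSemidef_add hS hX) (convex_posDef m)
    refine (hshift.add ih).congr ?_
    intro X (hX : X.PosDef)
    have h := log_det_rank_one (hX.add_posSemidef hS) (w k)
    simp only [Pi.add_apply, Function.comp_apply, Finset.sum_insert hk, ← hSdef]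
    rw [add_comm S X, ← h, add_comm (vecMulVec _ _) S, ← add_assoc]
    ring

/-- For `A ⪰ B ⪰ 0`, the difference
`Q ↦ log det(I + H(A + Q)Hᴴ) − log det(I + H(B + Q)Hᴴ)` is convex on the convex
set of Hermitian positive semidefinite matrices. -/
theorem logdet_difference_convex_on_psd (m n : ℕ) (H : Matrix (Fin m) (Fin n) ℂ)
    (A B : Matrix (Fin n) (Fin n) ℂ) (hA : A.PosSemidef) (hB : B.PosSemidef)
    (hAB : (A - B).PosSemidef) :
    ConvexOn ℝ {Q : Matrix (Fin n) (Fin n) ℂ | Q.PosSemidef}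
      (fun Q => logdetI (H * (A + Q) * Hᴴ) - logdetI (H * (B + Q) * Hᴴ)) := by
  obtain ⟨d, w, hw⟩ := posSemidef_iff_eq_sum_vecMulVec.1 (hAB.mul_mul_conjTranspose_same H)
  refine ⟨convex_posSemidef n, ?_⟩
  intro Q hQ R hR a b ha hb hab
  have hpd : ∀ P : Matrix (Fin n) (Fin n) ℂ, P.PosSemidef →
      (1 + H * (B + P) * Hᴴ).PosDef := fun P hP =>
    PosDef.one.add_posSemidef ((hB.add hP).mul_mul_conjTranspose_same H)
  have hsum : ∀ P : Matrix (Fin n) (Fin n) ℂ, 1 + H * (A + P) * Hᴴ =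
      (1 + H * (B + P) * Hᴴ) + ∑ i, vecMulVec (w i) (star (w i)) := by
    intro P
    rw [← hw, add_assoc, ← Matrix.add_mul, ← Matrix.mul_add]
    congr 3
    abel
  have haff : 1 + H * (B + (a • Q + b • R)) * Hᴴ =
      a • (1 + H * (B + Q) * Hᴴ) + b • (1 + H * (B + R) * Hᴴ) := by
    obtain rfl : b = 1 - a := by linarith
    simp only [Matrix.mul_add, Matrix.add_mul, Matrix.mul_smul, Matrix.smul_mul]
    module
  have h := (log_det_add_sum_convexOn Finset.univ w).2 (hpd Q hQ) (hpd R hR) ha hb hab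
  rw [← haff] at h
  simpa only [logdetI, hsum] using h
end
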